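/- arXiv:1401.2940 — 3 statements merged into one kernel-verified Lean document; each statement's English description precedes it below -/
import Mathlib

section
/- Let Λ be a finite connected 4-valent G-arc-transitive graph. If G has an abelian normal subgroup that is not semiregular on the vertices of Λ, then Λ is isomorphic to the Praeger–Xu graph PX(2,r,s) for some integers r ≥ 3 and 1 ≤ s ≤ r−1. -/
/- STATEMENT 2:
Let Λ be a finite connected 4-valent G-arc-transitive graph. If G has an abelian normal
subgroup that is not semiregular on the vertices of Λ, then Λ ≅ PX(2,r,s) for some
r ≥ 3 and 1 ≤ s ≤ r−1. -/

namespace Stmt2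

/-- Vertex set of `PX(2,r,s)`: `ℤ₂ˢ × ℤᵣ`. -/
abbrev PXV (r s : ℕ) : Type := (Fin s → ZMod 2) × ZMod r

/-- The defining relation of `PX(2,r,s)`: `(n₀,…,n_{s−1},x)` is joined to
`(n₁,…,n_s,x+1)`. -/
def pxRel (r s : ℕ) (a b : PXV r s) : Prop :=
  b.2 = a.2 + 1 ∧ ∀ (i : ℕ) (h : i + 1 < s), b.1 ⟨i, by omega⟩ = a.1 ⟨i + 1, h⟩

/-- The Praeger–Xu graph `PX(2,r,s)`. -/
def PX (r s : ℕ) : SimpleGraph (PXV r s) := SimpleGraph.fromRel (pxRel r s)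

/-- A set of permutations is semiregular if only the identity fixes a point. -/
def Semiregular {V : Type} (N : Subgroup (Equiv.Perm V)) : Prop :=
  ∀ n ∈ N, ∀ v : V, n v = v → n = 1

open MulAction
open scoped Pointwise IsMulCommutative

/-!
Replace the abelian normal subgroup by the subgroup `A` generated by its point stabilizers. Each
neighbour of a vertex `v` is moved by some element of `A` fixing `v`, so the four neighbours of `v`
lie in at most two `A`-orbits. If always in one, then `Λ = K₄,₄ = PX(2,4,1)`. Otherwise there is a
2-path `u, v, w` with `u` and `w` in different orbits, and an automorphism `g` carrying the arc
`(u, v)` to `(v, w)` permutes the `A`-orbits as a directed `r`-cycle whose consecutive orbits are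
joined by the edges.

As `A` is abelian, the stabilizer `S i` of a vertex in the `i`-th orbit fixes that orbit pointwise,
and `S i ∩ S (i + 1)` has index two in `S i`. Take `s` maximal such that `s` consecutive `S i`
generate a proper subgroup. This subgroup then has index two in `A` and splits each of the `s`
orbits concerned into two halves, which can be matched along the edges. A vertex lies in `s` such
windows, and the halves that contain it are the `s` binary digits of its coordinate in `PX(2,r,s)`.
-/

theorem forall_of_forall_adj {V : Type*} {Λ : SimpleGraph V} (hΛ : Λ.Preconnected) {P : V → Prop}
    {v : V} (hv : P v) (hadj : ∀ x y, Λ.Adj x y → P x → P y) (x : V) : P x := by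
  obtain ⟨p⟩ := hΛ v x
  induction p with
  | nil => exact hv
  | cons h _ ih => exact ih (hadj _ _ h hv)

theorem three_le_of_two_ne_zero {r : ℕ} [NeZero r] (h : (2 : ZMod r) ≠ 0) : 3 ≤ r := by
  by_contra! hr
  have hpos := NeZero.ne r
  interval_cases r
  · exact hpos rfl
  · exact h (Subsingleton.elim _ _)
  · exact h rfl

section Windows

variable {A R : Type*} [Group A] [AddCommMonoidWithOne R] {S : R → Subgroup A}

/-- The subgroup generated by the `m` consecutive members `S i, S (i + 1), …, S (i + m - 1)` of a
family of subgroups; the indices live in an arbitrary `R` so that they may wrap around `ZMod r`. -/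
def window (S : R → Subgroup A) (i : R) (m : ℕ) : Subgroup A :=
  ⨆ k < m, S (i + (k : ℕ))

theorem window_succ (S : R → Subgroup A) (i : R) (m : ℕ) :
    window S i (m + 1) = S i ⊔ window S (i + 1) m := by
  simp only [window, Nat.iSup_lt_succ', Nat.cast_zero, add_zero, Nat.cast_succ, add_assoc,
    add_comm (1 : R)]

theorem le_window {k m : ℕ} (hk : k < m) (i : R) : S (i + (k : ℕ)) ≤ window S i m :=
  le_iSup₂_of_le k hk le_rfl

theorem self_le_window {m : ℕ} (hm : 0 < m) (i : R) : S i ≤ window S i m := by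
  simpa using le_window (S := S) hm i

theorem window_mono {m m' : ℕ} (h : m ≤ m') (i : R) : window S i m ≤ window S i m' :=
  iSup₂_le fun _ hk => le_window (hk.trans_le h) i

theorem map_window {φ : A →* A} (hφ : ∀ i, (S i).map φ = S (i + 1)) (i : R) (m : ℕ) :
    (window S i m).map φ = window S (i + 1) m := by
  simp only [window, Subgroup.map_iSup, hφ, add_right_comm]

end Windows

section CriticalWindows

variable {R : Type*} [AddCommGroupWithOne R] {s : ℕ}

section Group

variable {A : Type*} [Group A] {S : R → Subgroup A}

theorem relIndex_window (hS : ∀ i, (S (i + 1)).relIndex (S i) = 2) (hs : 0 < s)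
    (hne : ∀ i, window S i s ≠ ⊤) (htop : ∀ i, window S i (s + 1) = ⊤) (i : R) :
    (window S (i + 1) s).relIndex (S i) = 2 := by
  have hdvd : (window S (i + 1) s).relIndex (S i) ∣ 2 :=
    hS i ▸ Subgroup.relIndex_dvd_of_le_left _ (self_le_window hs _)
  refine ((Nat.dvd_prime Nat.prime_two).1 hdvd).resolve_left fun h => hne (i + 1) ?_
  rw [← htop i, window_succ, eq_comm, sup_eq_right]
  exact Subgroup.relIndex_eq_one.1 h

theorem inf_window_le (hS : ∀ i, (S (i + 1)).relIndex (S i) = 2) (hs : 0 < s)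
    (hne : ∀ i, window S i s ≠ ⊤) (htop : ∀ i, window S i (s + 1) = ⊤) (i : R) :
    S i ⊓ window S (i + 1) s ≤ S (i + 1) := by
  have h := Subgroup.relIndex_inf_mul_relIndex (S (i + 1)) (window S (i + 1) s) (S i)
  rw [inf_eq_left.2 (self_le_window hs _), relIndex_window hS hs hne htop, hS] at h
  rw [inf_comm]
  exact Subgroup.relIndex_eq_one.1 (by omega)

end Group

section CommGroup

variable {A : Type*} [CommGroup A] {S : R → Subgroup A}

theorem index_window (hS : ∀ i, (S (i + 1)).relIndex (S i) = 2) (hs : 0 < s)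
    (hne : ∀ i, window S i s ≠ ⊤) (htop : ∀ i, window S i (s + 1) = ⊤) (i : R) :
    (window S i s).index = 2 := by
  have h := relIndex_window hS hs hne htop (i - 1)
  rwa [← Subgroup.relIndex_sup_right, ← window_succ, htop, Subgroup.relIndex_top_right,
    sub_add_cancel] at h

theorem window_succ_inf_window_le (hS : ∀ i, (S (i + 1)).relIndex (S i) = 2)
    (hne : ∀ i, window S i s ≠ ⊤) (htop : ∀ i, window S i (s + 1) = ⊤) {m : ℕ} (hm : 0 < m)
    (hms : m ≤ s) (i : R) :
    window S i (m + 1) ⊓ window S (i + 1) s ≤ window S (i + 1) m := by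
  rw [window_succ, sup_comm, sup_inf_assoc_of_le _ (window_mono hms _)]
  exact sup_le le_rfl
    ((inf_window_le hS (hm.trans_le hms) hne htop i).trans (self_le_window hm _))

theorem mem_of_forall_mem_window (hS : ∀ i, (S (i + 1)).relIndex (S i) = 2) (hs : 0 < s)
    (hne : ∀ i, window S i s ≠ ⊤) (htop : ∀ i, window S i (s + 1) = ⊤) {j : R} {n : A}
    (hn : ∀ a < s, n ∈ window S (j - (a : ℕ)) s) : n ∈ S j := by
  have key : n ∈ window S (j - ((0 : ℕ) : R)) (0 + 1) := by
    refine Nat.decreasingInduction' (P := fun a => n ∈ window S (j - (a : ℕ)) (a + 1))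
      (fun a ha _ ih => ?_) (s - 1).zero_le ?_
    · have hj : j - ((a + 1 : ℕ) : R) + 1 = j - (a : ℕ) := by push_cast; abel
      rw [← hj]
      exact window_succ_inf_window_le hS hne htop a.succ_pos (by omega) _
        ⟨ih, hj ▸ hn a (by omega)⟩
    · simpa only [Nat.sub_add_cancel hs] using hn (s - 1) (by omega)
  simpa [window] using key

end CommGroup

end CriticalWindows

section CyclicWindows

variable {A : Type*} [Group A] {r : ℕ} [NeZero r] {S : ZMod r → Subgroup A}

theorem exists_natCast_add_eq (i j : ZMod r) : ∃ k < r, i + (k : ℕ) = j :=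
  ⟨(j - i).val, ZMod.val_lt _, by rw [ZMod.natCast_zmod_val, add_sub_cancel]⟩

theorem window_eq_top_of_card (hS : ⨆ i, S i = ⊤) (i : ZMod r) : window S i r = ⊤ := by
  rw [eq_top_iff, ← hS]
  refine iSup_le fun j => ?_
  obtain ⟨k, hk, rfl⟩ := exists_natCast_add_eq i j
  exact le_window hk i

theorem window_eq_top_of_map {φ : A →* A} (hφ : ∀ i, (S i).map φ = S (i + 1))
    (hsurj : Function.Surjective φ) {i : ZMod r} {m : ℕ} (h : window S i m = ⊤) (j : ZMod r) :
    window S j m = ⊤ := by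
  obtain ⟨k, -, rfl⟩ := exists_natCast_add_eq i j
  induction k with
  | zero => simpa using h
  | succ k ih =>
    rw [Nat.cast_succ, ← add_assoc, ← map_window hφ, ih, Subgroup.map_top_of_surjective φ hsurj]

theorem exists_critical_length {φ : A →* A} (hφ : ∀ i, (S i).map φ = S (i + 1))
    (hsurj : Function.Surjective φ) (hS : ∀ i, S i ≠ ⊤) (htop : ⨆ i, S i = ⊤) :
    ∃ s, 0 < s ∧ s < r ∧ (∀ i, window S i s ≠ ⊤) ∧ ∀ i, window S i (s + 1) = ⊤ := by
  classical
  have hex : ∃ m, window S 0 m = ⊤ := ⟨r, window_eq_top_of_card htop 0⟩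
  have hle : Nat.find hex ≤ r := Nat.find_le (window_eq_top_of_card htop 0)
  have htwo : 1 < Nat.find hex := by
    refine (Nat.lt_find_iff hex 1).2 fun m hm h => hS 0 (top_le_iff.1 ?_)
    simpa [window] using h.ge.trans (window_mono hm 0)
  refine ⟨Nat.find hex - 1, by omega, by omega, fun i h => ?_, ?_⟩
  · exact Nat.find_min hex (by omega) (window_eq_top_of_map hφ hsurj h 0)
  · rw [Nat.sub_add_cancel htwo.le]
    exact window_eq_top_of_map hφ hsurj (Nat.find_spec hex)

end CyclicWindows

section PraegerXu

variable {r s : ℕ}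

theorem pxRel_ext {p q q' : PXV r s} (h : pxRel r s p q) (h' : pxRel r s p q')
    (hlast : ∀ k : Fin s, (k : ℕ) + 1 = s → q.1 k = q'.1 k) : q = q' := by
  refine Prod.ext (funext fun k => ?_) (h.1.trans h'.1.symm)
  rcases Nat.lt_or_eq_of_le (Nat.succ_le_of_lt k.isLt) with hk | hk
  · exact (h.2 k hk).trans (h'.2 k hk).symm
  · exact hlast k hk

theorem exists_pxRel_with_last (p q : PXV r s) :
    ∃ p', pxRel r s p p' ∧ ∀ k : Fin s, (k : ℕ) + 1 = s → p'.1 k = q.1 k :=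
  ⟨(fun k => if h : (k : ℕ) + 1 < s then p.1 ⟨k + 1, h⟩ else q.1 k, p.2 + 1),
    ⟨rfl, fun _ h => dif_pos h⟩, fun _ hk => dif_neg hk.not_lt⟩

theorem exists_pxRel_to (q : PXV r s) : ∃ p, pxRel r s p q :=
  ⟨(fun k => if (k : ℕ) = 0 then 0 else q.1 ⟨k - 1, by omega⟩, q.2 - 1),
    (sub_add_cancel _ _).symm, fun _ _ => rfl⟩

variable {V : Type*} {Λ : SimpleGraph V} {f : V → PXV r s}

theorem exists_adj_eq_of_pxRel (hf : f.Injective)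
    (hup : ∀ v, ∃ u₁ u₂, u₁ ≠ u₂ ∧ (Λ.Adj v u₁ ∧ pxRel r s (f v) (f u₁)) ∧
      Λ.Adj v u₂ ∧ pxRel r s (f v) (f u₂))
    {v : V} {q : PXV r s} (hq : pxRel r s (f v) q) : ∃ u, Λ.Adj v u ∧ f u = q := by
  obtain ⟨u₁, u₂, hne, ⟨hadj₁, hrel₁⟩, hadj₂, hrel₂⟩ := hup v
  by_cases h₁ : f u₁ = q
  · exact ⟨u₁, hadj₁, h₁⟩
  by_cases h₂ : f u₂ = q
  · exact ⟨u₂, hadj₂, h₂⟩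
  -- Otherwise both last digits differ from that of `q`, hence coincide in `ZMod 2`.
  refine absurd (hf (pxRel_ext hrel₁ hrel₂ fun k hk => ?_)) hne
  have last_ne {p : PXV r s} (hp : pxRel r s (f v) p) (hpq : p ≠ q) : p.1 k ≠ q.1 k :=
    fun h => hpq (pxRel_ext hp hq fun l hl => by
      rwa [show l = k from Fin.ext (by omega)])
  have eq_of_ne : ∀ a b c : ZMod 2, a ≠ c → b ≠ c → a = b := by decide
  exact eq_of_ne _ _ _ (last_ne hrel₁ h₁) (last_ne hrel₂ h₂)

theorem surjective_of_exists_eq_of_pxRel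
    (hsucc : ∀ v q, pxRel r s (f v) q → ∃ u, f u = q) (hsnd : ∀ x, ∃ v, (f v).2 = x) :
    f.Surjective := by
  -- Walking up `m` steps from a suitable vertex prescribes the last `m` digits.
  have key : ∀ m, ∀ q : PXV r s, ∃ v, (f v).2 = q.2 ∧ ∀ k : Fin s, s ≤ k + m →
      (f v).1 k = q.1 k := by
    intro m
    induction m with
    | zero =>
      intro q
      obtain ⟨v, hv⟩ := hsnd q.2
      exact ⟨v, hv, fun k hk => absurd k.isLt (by omega)⟩
    | succ m ih =>
      intro q
      obtain ⟨p, hp⟩ := exists_pxRel_to q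
      obtain ⟨v, hv, hdigit⟩ := ih p
      obtain ⟨q', hq', hlast⟩ := exists_pxRel_with_last (f v) q
      obtain ⟨u, rfl⟩ := hsucc v q' hq'
      refine ⟨u, by rw [hq'.1, hp.1, hv], fun k hk => ?_⟩
      rcases Nat.lt_or_eq_of_le (Nat.succ_le_of_lt k.isLt) with hks | hks
      · exact (hq'.2 k hks).trans ((hdigit ⟨k + 1, hks⟩ (by simp; omega)).trans
          (hp.2 k hks).symm)
      · exact hlast k hks
  intro q
  obtain ⟨v, hv, hdigit⟩ := key s q
  exact ⟨v, Prod.ext (funext fun k => hdigit k (by omega)) hv⟩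

theorem nonempty_iso_PX (hf : f.Injective)
    (hadj : ∀ v w, Λ.Adj v w → pxRel r s (f v) (f w) ∨ pxRel r s (f w) (f v))
    (hup : ∀ v, ∃ u₁ u₂, u₁ ≠ u₂ ∧ (Λ.Adj v u₁ ∧ pxRel r s (f v) (f u₁)) ∧
      Λ.Adj v u₂ ∧ pxRel r s (f v) (f u₂))
    (hsnd : ∀ x, ∃ v, (f v).2 = x) : Nonempty (Λ ≃g PX r s) := by
  have adj_of_pxRel {v w : V} (h : pxRel r s (f v) (f w)) : Λ.Adj v w := by
    obtain ⟨u, hvu, hu⟩ := exists_adj_eq_of_pxRel hf hup h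
    exact hf hu ▸ hvu
  have hsurj : f.Surjective := surjective_of_exists_eq_of_pxRel
    (fun v q hq => (exists_adj_eq_of_pxRel hf hup hq).imp fun _ h => h.2) hsnd
  refine ⟨Equiv.ofBijective f ⟨hf, hsurj⟩, fun {v w} => ?_⟩
  simp only [PX, SimpleGraph.fromRel_adj]
  exact ⟨fun h => h.2.elim adj_of_pxRel fun h => (adj_of_pxRel h).symm,
    fun h => ⟨hf.ne h.ne, hadj v w h⟩⟩

end PraegerXu

section CyclicFibration

variable {V : Type*} {r : ℕ}

/-- The map `π` exhibits the orbits of `A` on the vertices of `Λ` as the fibres over a directed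
`r`-cycle: edges join consecutive fibres, and every vertex `v` has exactly two neighbours in the
next fibre, which are interchanged by an element `a` of the stabilizer of `v`. -/
structure IsCyclicFibration (A : Type*) [Group A] [MulAction A V] (Λ : SimpleGraph V)
    (π : V → ZMod r) : Prop where
  surjective : π.Surjective
  apply_eq_iff {v w : V} : π v = π w ↔ ∃ a : A, a • v = w
  adj_smul (a : A) {v w : V} : Λ.Adj v w → Λ.Adj (a • v) (a • w)
  adj_cases {v w : V} : Λ.Adj v w → π w = π v + 1 ∨ π v = π w + 1
  exists_up (v : V) : ∃ u, ∃ a : A, Λ.Adj v u ∧ π u = π v + 1 ∧ a • v = v ∧ a • u ≠ u ∧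
    ∀ w, Λ.Adj v w → π w = π v + 1 → w = u ∨ w = a • u

/-- The pointwise stabilizer in `A` of the fibre of `π` over `i`. For abelian `A` it is the
stabilizer of any single vertex of the fibre. -/
def fiberFixer (A : Type*) [Group A] [MulAction A V] (π : V → ZMod r) (i : ZMod r) :
    Subgroup A :=
  fixingSubgroup A (π ⁻¹' {i})

/-- The part of `s` consecutive fibres swept out by a subgroup `H` from a path `b` that crosses
them. When `H` has index two and contains all stabilizers, it splits every one of these fibres into
two halves. -/
def halfWindow {A : Type*} [Group A] [MulAction A V] (H : Subgroup A) (b : ℕ → V) (s : ℕ) :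
    Set V :=
  ⋃ a < s, orbit H (b a)

namespace IsCyclicFibration

section Group

variable {A : Type*} [Group A] [MulAction A V] {Λ : SimpleGraph V} {π : V → ZMod r}

theorem apply_smul (h : IsCyclicFibration A Λ π) (a : A) (v : V) : π (a • v) = π v :=
  (h.apply_eq_iff.2 ⟨a, rfl⟩).symm

theorem exists_up_path (h : IsCyclicFibration A Λ π) (j : ZMod r) :
    ∃ b : ℕ → V, (∀ a : ℕ, π (b a) = j + a) ∧ ∀ a, Λ.Adj (b a) (b (a + 1)) := by
  choose up _ hadj hup _ using h.exists_up
  obtain ⟨v, rfl⟩ := h.surjective j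
  have hstep (a : ℕ) : up^[a + 1] v = up (up^[a] v) := Function.iterate_succ_apply' _ _ _
  refine ⟨fun a => up^[a] v, fun a => ?_, fun a => by simpa only [hstep] using hadj _⟩
  induction a with
  | zero => simp
  | succ a ih =>
    beta_reduce at ih ⊢
    rw [hstep, hup, ih, Nat.cast_succ, add_assoc]

end Group

section CommGroup

variable {A : Type*} [CommGroup A] [MulAction A V] {Λ : SimpleGraph V} {π : V → ZMod r}

theorem mem_fiberFixer_iff (h : IsCyclicFibration A Λ π) {a : A} {v : V} :
    a ∈ fiberFixer A π (π v) ↔ a • v = v := by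
  refine ⟨fun ha => (mem_fixingSubgroup_iff A).1 ha v rfl,
    fun ha => (mem_fixingSubgroup_iff A).2 fun w hw => ?_⟩
  obtain ⟨b, rfl⟩ := h.apply_eq_iff.1 (Eq.symm hw)
  rw [smul_comm, ha]

theorem exists_fiberFixer_smul_eq (h : IsCyclicFibration A Λ π) {v w w' : V} (hw : Λ.Adj v w)
    (hπw : π w = π v + 1) (hw' : Λ.Adj v w') (hπw' : π w' = π v + 1) :
    ∃ a ∈ fiberFixer A π (π v), a • w = w' := by
  obtain ⟨u, a, -, -, hav, -, hu⟩ := h.exists_up v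
  have ha := h.mem_fiberFixer_iff.2 hav
  rcases hu w hw hπw with rfl | rfl <;> rcases hu w' hw' hπw' with rfl | rfl
  · exact ⟨1, one_mem _, one_smul _ _⟩
  · exact ⟨a, ha, rfl⟩
  · exact ⟨a⁻¹, inv_mem ha, inv_smul_smul _ _⟩
  · exact ⟨1, one_mem _, one_smul _ _⟩

theorem relIndex_fiberFixer (h : IsCyclicFibration A Λ π) (i : ZMod r) :
    (fiberFixer A π (i + 1)).relIndex (fiberFixer A π i) = 2 := by
  obtain ⟨v, rfl⟩ := h.surjective i
  obtain ⟨u, a, hvu, hπu, hav, hau, hu⟩ := h.exists_up v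
  have smul_cases {b : A} (hb : b • v = v) : b • u = u ∨ b • u = a • u :=
    hu _ (hb ▸ h.adj_smul b hvu) ((h.apply_smul b u).trans hπu)
  have haa : a • a • u = u := by
    rw [← mul_smul]
    refine (smul_cases (by rw [mul_smul, hav, hav])).resolve_right fun haa => hau ?_
    rwa [mul_smul, smul_left_cancel_iff] at haa
  rw [← hπu, Subgroup.relIndex_eq_two_iff]
  refine ⟨a, h.mem_fiberFixer_iff.2 hav, fun b hb => ?_⟩
  simp only [h.mem_fiberFixer_iff, mul_smul] at hb ⊢
  rw [smul_comm b a u]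
  rcases smul_cases hb with hbu | hbu
  · exact Or.inr ⟨hbu, by rwa [hbu]⟩
  · exact Or.inl ⟨by rw [hbu, haa], by rwa [hbu]⟩

theorem map_fiberFixer (h : IsCyclicFibration A Λ π) {g : V → V} {φ : A ≃* A}
    (hg : g.Injective) (hφ : ∀ a v, φ a • g v = g (a • v)) (hπ : ∀ v, π (g v) = π v + 1)
    (i : ZMod r) : (fiberFixer A π i).map φ.toMonoidHom = fiberFixer A π (i + 1) := by
  obtain ⟨v, rfl⟩ := h.surjective i
  ext a
  rw [← hπ v, Subgroup.mem_map_equiv, h.mem_fiberFixer_iff, h.mem_fiberFixer_iff,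
    ← hg.eq_iff, ← hφ, MulEquiv.apply_symm_apply]

theorem iSup_fiberFixer_eq_top (h : IsCyclicFibration A Λ π)
    (hstab : ⨆ v : V, stabilizer A v = ⊤) : ⨆ i, fiberFixer A π i = ⊤ :=
  top_unique (hstab ▸ iSup_le fun v =>
    le_iSup_of_le (π v) fun _ ha => h.mem_fiberFixer_iff.2 ha)

section HalfWindow

variable {s : ℕ} {j : ZMod r} {H : Subgroup A} {b : ℕ → V}

theorem smul_path_mem_halfWindow_iff (h : IsCyclicFibration A Λ π) (hs : s ≤ r)
    (hH : ∀ a < s, fiberFixer A π (j + (a : ℕ)) ≤ H) (hb : ∀ a : ℕ, π (b a) = j + a) {a : ℕ}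
    (ha : a < s) {n : A} : n • b a ∈ halfWindow H b s ↔ n ∈ H := by
  simp only [halfWindow, Set.mem_iUnion]
  refine ⟨?_, fun hn => ⟨a, ha, ⟨n, hn⟩, rfl⟩⟩
  rintro ⟨a', ha', ⟨m, hm⟩, heq : m • b a' = n • b a⟩
  obtain rfl : a' = a := by
    have hπ := congrArg π heq
    rw [h.apply_smul, h.apply_smul, hb, hb, add_right_inj] at hπ
    exact CharP.natCast_injOn_Iio (ZMod r) r (ha'.trans_le hs) (ha.trans_le hs) hπ
  have hfix : m⁻¹ * n ∈ fiberFixer A π (π (b a')) :=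
    h.mem_fiberFixer_iff.2 (by rw [mul_smul, ← heq, inv_smul_smul])
  have hmul := mul_mem hm (hH a' ha (hb a' ▸ hfix))
  rwa [mul_inv_cancel_left] at hmul

theorem smul_mem_halfWindow_iff (h : IsCyclicFibration A Λ π) (hs : s ≤ r)
    (hH : ∀ a < s, fiberFixer A π (j + (a : ℕ)) ≤ H) (hindex : H.index = 2)
    (hb : ∀ a : ℕ, π (b a) = j + a) {a : ℕ} (ha : a < s) {v : V} (hv : π v = j + a) (n : A) :
    n • v ∈ halfWindow H b s ↔ (n ∈ H ↔ v ∈ halfWindow H b s) := by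
  obtain ⟨m, rfl⟩ := h.apply_eq_iff.1 ((hb a).trans hv.symm)
  rw [← mul_smul, h.smul_path_mem_halfWindow_iff hs hH hb ha,
    h.smul_path_mem_halfWindow_iff hs hH hb ha, Subgroup.mul_mem_iff_of_index_two hindex]

theorem mem_halfWindow_iff_of_adj (h : IsCyclicFibration A Λ π) (hs : s ≤ r)
    (hH : ∀ a < s, fiberFixer A π (j + (a : ℕ)) ≤ H) (hb : ∀ a : ℕ, π (b a) = j + a)
    (hadj : ∀ a, Λ.Adj (b a) (b (a + 1))) {a : ℕ} (ha : a + 1 < s) {v w : V}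
    (hv : π v = j + a) (hvw : Λ.Adj v w) (hw : π w = π v + 1) :
    v ∈ halfWindow H b s ↔ w ∈ halfWindow H b s := by
  obtain ⟨m, rfl⟩ := h.apply_eq_iff.1 ((hb a).trans hv.symm)
  obtain ⟨n, hn, rfl⟩ := h.exists_fiberFixer_smul_eq (h.adj_smul m (hadj a))
    (by rw [h.apply_smul, h.apply_smul, hb, hb, Nat.cast_succ, add_assoc]) hvw hw
  rw [← mul_smul, h.smul_path_mem_halfWindow_iff hs hH hb ha,
    h.smul_path_mem_halfWindow_iff hs hH hb (by omega),
    Subgroup.mul_mem_cancel_left _ (hH a (by omega) (hv ▸ hn))]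

end HalfWindow

section Coordinates

variable {s : ℕ}

theorem exists_labels (h : IsCyclicFibration A Λ π) (hs : s ≤ r)
    (hindex : ∀ i, (window (fiberFixer A π) i s).index = 2) :
    ∃ W : ZMod r → Set V, ∀ (j : ZMod r) (a : ℕ) (v : V), π v = j + a →
      (a < s → ∀ n : A, n • v ∈ W j ↔ (n ∈ window (fiberFixer A π) j s ↔ v ∈ W j)) ∧
      (a + 1 < s → ∀ w, Λ.Adj v w → π w = π v + 1 → (v ∈ W j ↔ w ∈ W j)) := by
  choose b hb hadj using h.exists_up_path
  have hle (j : ZMod r) (a : ℕ) (ha : a < s) :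
      fiberFixer A π (j + (a : ℕ)) ≤ window (fiberFixer A π) j s := le_window ha j
  exact ⟨fun j => halfWindow (window (fiberFixer A π) j s) (b j) s, fun j a v hv =>
    ⟨fun ha => h.smul_mem_halfWindow_iff hs (hle j) (hindex j) (hb j) ha hv,
      fun ha _ => h.mem_halfWindow_iff_of_adj hs (hle j) (hb j) (hadj j) ha hv⟩⟩

theorem exists_coordinates (h : IsCyclicFibration A Λ π) (hs : 0 < s) (hsr : s ≤ r)
    (hne : ∀ i, window (fiberFixer A π) i s ≠ ⊤)
    (htop : ∀ i, window (fiberFixer A π) i (s + 1) = ⊤) :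
    ∃ f : V → PXV r s, f.Injective ∧ (∀ v, (f v).2 = π v) ∧
      ∀ v w, Λ.Adj v w → π w = π v + 1 → pxRel r s (f v) (f w) := by
  classical
  have hrel := h.relIndex_fiberFixer
  obtain ⟨W, hW⟩ := h.exists_labels hsr (index_window hrel hs hne htop)
  -- Digit `k` of `v` records in which half `v` lies when its fibre is the `(s - 1 - k)`-th of a
  -- window of `s` fibres.
  refine ⟨fun v => (fun k => if v ∈ W (π v - (k.rev : ℕ)) then 1 else 0, π v), ?_,
    fun _ => rfl, fun v w hvw hπ => ⟨hπ, fun k hk => ?_⟩⟩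
  · intro v w hvw
    obtain ⟨hdigit, hπ⟩ := Prod.ext_iff.1 hvw
    obtain ⟨n, rfl⟩ := h.apply_eq_iff.1 hπ
    refine (h.mem_fiberFixer_iff.1 (mem_of_forall_mem_window hrel hs hne htop ?_)).symm
    intro a ha
    have hlabel := (hW (π v - (a : ℕ)) a v (sub_add_cancel _ _).symm).1 ha n
    have hsame := congrFun hdigit (Fin.rev ⟨a, ha⟩)
    simp only [Fin.rev_rev, h.apply_smul] at hsame
    by_cases hv : v ∈ W (π v - (a : ℕ)) <;> simp_all
  · have hrev : (Fin.rev (⟨k, by omega⟩ : Fin s) : ℕ) =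
        (Fin.rev (⟨k + 1, hk⟩ : Fin s) : ℕ) + 1 := by
      simp only [Fin.val_rev]
      omega
    have hj : π w - (Fin.rev (⟨k, by omega⟩ : Fin s) : ℕ) =
        π v - (Fin.rev (⟨k + 1, hk⟩ : Fin s) : ℕ) := by
      rw [hrev, hπ, Nat.cast_succ, add_sub_add_right_eq_sub]
    have hlabel := (hW _ _ v (sub_add_cancel _ _).symm).2 (hrev ▸ Fin.isLt _) w hvw hπ
    exact if_congr (hj ▸ hlabel.symm) rfl rfl

theorem nonempty_iso_PX (h : IsCyclicFibration A Λ π) (hs : 0 < s) (hsr : s ≤ r)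
    (hne : ∀ i, window (fiberFixer A π) i s ≠ ⊤)
    (htop : ∀ i, window (fiberFixer A π) i (s + 1) = ⊤) : Nonempty (Λ ≃g PX r s) := by
  obtain ⟨f, hf, hsnd, hrel⟩ := h.exists_coordinates hs hsr hne htop
  refine Stmt2.nonempty_iso_PX hf (fun v w hvw => ?_) (fun v => ?_) fun x => ?_
  · exact (h.adj_cases hvw).imp (hrel v w hvw) (hrel w v hvw.symm)
  · obtain ⟨u, a, hvu, hπu, hav, hau, -⟩ := h.exists_up v
    have hvau : Λ.Adj v (a • u) := hav ▸ h.adj_smul a hvu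
    exact ⟨u, a • u, hau.symm, ⟨hvu, hrel v u hvu hπu⟩, hvau,
      hrel v _ hvau ((h.apply_smul a u).trans hπu)⟩
  · exact (h.surjective x).imp fun v hv => (hsnd v).trans hv

theorem exists_nonempty_iso_PX [NeZero r] (h : IsCyclicFibration A Λ π) {g : V → V}
    {φ : A ≃* A} (hg : g.Injective) (hφ : ∀ a v, φ a • g v = g (a • v))
    (hπ : ∀ v, π (g v) = π v + 1) (hstab : ⨆ v : V, stabilizer A v = ⊤) :
    ∃ s, 0 < s ∧ s < r ∧ Nonempty (Λ ≃g PX r s) := by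
  have hproper (i : ZMod r) : fiberFixer A π i ≠ ⊤ := fun hi => by
    have hrel := h.relIndex_fiberFixer (i - 1)
    rw [sub_add_cancel, hi, Subgroup.relIndex_top_left] at hrel
    omega
  obtain ⟨s, hs, hsr, hne, htop⟩ := exists_critical_length (h.map_fiberFixer hg hφ hπ)
    φ.surjective hproper (h.iSup_fiberFixer_eq_top hstab)
  exact ⟨s, hs, hsr, h.nonempty_iso_PX hs hsr.le hne htop⟩

end Coordinates

end CommGroup

end IsCyclicFibration

end CyclicFibration

section CompleteBipartite

theorem nonempty_iso_of_forall_adj_iff {V W : Type*} [Finite V] [Finite W] {Λ : SimpleGraph V}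
    {Γ : SimpleGraph W} {S : Set V} {T : Set W} (hS : ∀ x y, Λ.Adj x y ↔ (x ∈ S ↔ y ∉ S))
    (hT : ∀ x y, Γ.Adj x y ↔ (x ∈ T ↔ y ∉ T)) (hcard : S.ncard = T.ncard)
    (hcard' : Sᶜ.ncard = Tᶜ.ncard) : Nonempty (Λ ≃g Γ) := by
  classical
  obtain ⟨e⟩ : Nonempty (S ≃ T) := Finite.card_eq.1 hcard
  obtain ⟨e'⟩ : Nonempty ((Sᶜ : Set V) ≃ (Tᶜ : Set W)) := Finite.card_eq.1 hcard'
  let E : V ≃ W := (Equiv.Set.sumCompl S).symm.trans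
    ((Equiv.sumCongr e e').trans (Equiv.Set.sumCompl T))
  have mem_iff (x : V) : E x ∈ T ↔ x ∈ S := by
    by_cases hx : x ∈ S
    · simp [E, hx, Equiv.Set.sumCompl_symm_apply_of_mem hx]
    · have hx' : (e' ⟨x, hx⟩ : W) ∉ T := (e' ⟨x, hx⟩).2
      simpa [E, hx, Equiv.Set.sumCompl_symm_apply_of_notMem hx] using hx'
  exact ⟨E, fun {x y} => by rw [hT, hS, mem_iff, mem_iff]⟩

theorem PX_four_one_adj_iff (p q : PXV 4 1) : (PX 4 1).Adj p q ↔
    (p ∈ {p : PXV 4 1 | p.2 = 1 ∨ p.2 = 3} ↔ q ∉ {p : PXV 4 1 | p.2 = 1 ∨ p.2 = 3}) := by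
  have key : ∀ x y : ZMod 4, x = y + 1 ∨ y = x + 1 ↔
      ((x = 1 ∨ x = 3) ↔ ¬(y = 1 ∨ y = 3)) := by decide
  have ne_succ : ∀ x : ZMod 4, x ≠ x + 1 := by decide
  have pxRel_iff (p q : PXV 4 1) : pxRel 4 1 p q ↔ q.2 = p.2 + 1 :=
    and_iff_left fun i hi => absurd hi (by omega)
  simp only [PX, SimpleGraph.fromRel_adj, pxRel_iff]
  rw [or_comm]
  refine Iff.trans (and_iff_right_of_imp ?_) (key p.2 q.2)
  rintro h rfl
  exact h.elim (ne_succ _) (ne_succ _)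

theorem mem_orbit_or_mem_orbit {A V : Type*} [Group A] [MulAction A V]
    {Λ : SimpleGraph V} (hΛ : Λ.Preconnected)
    (hsmul : ∀ (a : A) (x y : V), Λ.Adj x y → Λ.Adj (a • x) (a • y))
    (hsame : ∀ x y z : V, Λ.Adj x y → Λ.Adj x z → orbit A y = orbit A z) {v w : V}
    (hvw : Λ.Adj v w) (x : V) : x ∈ orbit A v ∨ x ∈ orbit A w := by
  refine forall_of_forall_adj (P := fun x => x ∈ orbit A v ∨ x ∈ orbit A w) hΛ
    (Or.inl (mem_orbit_self v)) (fun x y hxy hx => ?_) x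
  rcases hx with ⟨a, rfl⟩ | ⟨a, rfl⟩
  · rw [← orbit_eq_iff (a := y) (b := w), hsame _ _ _ hxy (hsmul a _ _ hvw), orbit_smul]
    exact Or.inr rfl
  · rw [← orbit_eq_iff (a := y) (b := v), hsame _ _ _ hxy (hsmul a _ _ hvw.symm), orbit_smul]
    exact Or.inl rfl

variable {A V : Type*} [CommGroup A] [MulAction A V] {Λ : SimpleGraph V}

theorem adj_of_mem_orbit (hsmul : ∀ (a : A) (x y : V), Λ.Adj x y → Λ.Adj (a • x) (a • y))
    (hstab : ⨆ x : V, stabilizer A x = ⊤) {v w : V} (hvw : Λ.Adj v w)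
    (hcover : ∀ x, x ∈ orbit A v ∨ x ∈ orbit A w) {x y : V} (hx : x ∈ orbit A v)
    (hy : y ∈ orbit A w) : Λ.Adj x y := by
  obtain ⟨a, rfl⟩ := hx
  obtain ⟨b, rfl⟩ := hy
  have htop : stabilizer A v ⊔ stabilizer A w = ⊤ := by
    refine top_unique (hstab ▸ iSup_le fun x => ?_)
    rcases hcover x with ⟨c, rfl⟩ | ⟨c, rfl⟩
    · exact (stabilizer_smul_eq_right c v).le.trans le_sup_left
    · exact (stabilizer_smul_eq_right c w).le.trans le_sup_right
  obtain ⟨p, hp, q, hq, hpq⟩ := Subgroup.mem_sup.1 (htop ▸ Subgroup.mem_top (a⁻¹ * b))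
  have hb : b • w = a • p • w := by
    rw [eq_mul_of_inv_mul_eq hpq.symm, mul_smul, mul_smul, mem_stabilizer_iff.1 hq]
  have ha : a • v = a • p • v := by rw [mem_stabilizer_iff.1 hp]
  beta_reduce
  rw [ha, hb]
  exact hsmul _ _ _ (hsmul _ _ _ hvw)

theorem nonempty_iso_PX_four_one [Finite V] (hΛ : Λ.Preconnected)
    (hval : ∀ v, (Λ.neighborSet v).ncard = 4)
    (hsmul : ∀ (a : A) (x y : V), Λ.Adj x y → Λ.Adj (a • x) (a • y))
    (hstab : ⨆ x : V, stabilizer A x = ⊤)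
    (hne : ∀ x y : V, Λ.Adj x y → orbit A x ≠ orbit A y)
    (hsame : ∀ x y z : V, Λ.Adj x y → Λ.Adj x z → orbit A y = orbit A z) {v w : V}
    (hvw : Λ.Adj v w) : Nonempty (Λ ≃g PX 4 1) := by
  have hcover := mem_orbit_or_mem_orbit hΛ hsmul hsame hvw
  have hcompl (x : V) : x ∉ orbit A v ↔ x ∈ orbit A w := by
    refine ⟨(hcover x).resolve_left, fun hw hv => hne v w hvw ?_⟩
    rw [← orbit_eq_iff.2 hv, ← orbit_eq_iff.2 hw]
  have adj_of_mem {x y : V} (hx : x ∈ orbit A v) (hy : y ∈ orbit A w) : Λ.Adj x y :=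
    adj_of_mem_orbit hsmul hstab hvw hcover hx hy
  have hadj (x y : V) : Λ.Adj x y ↔ (x ∈ orbit A v ↔ y ∉ orbit A v) := by
    refine ⟨fun h => ?_, fun h => ?_⟩
    · have hxy := hne x y h
      have := hcover x
      have := hcover y
      simp only [← hcompl, ← orbit_eq_iff] at *
      grind
    · by_cases hx : x ∈ orbit A v
      · exact adj_of_mem hx ((hcompl y).1 (h.1 hx))
      · exact (adj_of_mem (not_not.1 (mt h.2 hx)) ((hcompl x).1 hx)).symm
  have hv : Λ.neighborSet v = (orbit A v)ᶜ := by
    ext x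
    simp [hadj]
  have hw : Λ.neighborSet w = orbit A v := by
    ext x
    have := (hcompl w).2 (mem_orbit_self w)
    simp [hadj, this]
  refine nonempty_iso_of_forall_adj_iff hadj PX_four_one_adj_iff ?_ ?_
  · rw [← hw, hval, Set.ncard_eq_toFinset_card']
    decide
  · rw [← hv, hval, Set.ncard_eq_toFinset_card']
    decide

end CompleteBipartite

section CyclicLabelling

variable {G X : Type*} [Group G] [MulAction G X]

theorem orbitZPowersEquiv_smul (g : G) (x : X) (y : orbit (Subgroup.zpowers g) x) :
    orbitZPowersEquiv g x ((⟨g, Subgroup.mem_zpowers g⟩ : Subgroup.zpowers g) • y) =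
      orbitZPowersEquiv g x y + 1 := by
  obtain ⟨k, hk⟩ := ZMod.intCast_surjective (orbitZPowersEquiv g x y)
  rw [← hk, ← Equiv.eq_symm_apply, add_comm, ← Int.cast_one, ← Int.cast_add,
    orbitZPowersEquiv_symm_apply', zpow_one_add, mul_smul, ← orbitZPowersEquiv_symm_apply', hk,
    Equiv.symm_apply_apply]

theorem exists_cyclic_labelling {V : Type*} [MulAction G V] {p : V → X}
    (hp : ∀ (h : G) (v : V), p (h • v) = h • p v) {g : G} {v₀ : V}
    (hmem : ∀ v, p v ∈ orbit (Subgroup.zpowers g) (p v₀)) :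
    ∃ (r : ℕ) (π : V → ZMod r), π.Surjective ∧ (∀ v, π (g • v) = π v + 1) ∧
      ∀ v w, π v = π w ↔ p v = p w := by
  refine ⟨_, fun v => orbitZPowersEquiv g (p v₀) ⟨p v, hmem v⟩, fun x => ?_, fun v => ?_,
    fun v w => by simp⟩
  · obtain ⟨⟨_, h, rfl⟩, rfl⟩ := (orbitZPowersEquiv g (p v₀)).surjective x
    exact ⟨h • v₀, congrArg _ (Subtype.ext (hp h v₀))⟩
  · rw [← orbitZPowersEquiv_smul]
    exact congrArg _ (Subtype.ext (hp g v))

end CyclicLabelling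

section ArcTransitive

variable {G V : Type*} [Group G] [MulAction G V] {Λ : SimpleGraph V}

/-- `G` acts on the graph `Λ` by automorphisms, transitively on arcs. -/
structure IsArcTransitive (G : Type*) {V : Type*} [Group G] [MulAction G V]
    (Λ : SimpleGraph V) : Prop where
  adj_smul_iff (g : G) {v w : V} : Λ.Adj (g • v) (g • w) ↔ Λ.Adj v w
  exists_smul_eq {v w v' w' : V} : Λ.Adj v w → Λ.Adj v' w' → ∃ g : G, g • v = v' ∧ g • w = w'

/-- The orbits of the normal subgroup `N` meeting the neighbourhood of `v` are exactly the images
of the orbit of `v` under `g` and `g⁻¹`. -/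
structure IsRotatedAt (Λ : SimpleGraph V) (N : Subgroup G) (g : G) (v : V) : Prop where
  orbit_cases (w : V) : Λ.Adj v w →
    orbit N w = orbit N (g • v) ∨ orbit N (g • w) = orbit N v
  exists_succ : ∃ u, Λ.Adj v u ∧ orbit N u = orbit N (g • v)
  exists_pred : ∃ x, Λ.Adj v x ∧ orbit N (g • x) = orbit N v

theorem orbit_smul_eq_orbit_smul_iff {N : Subgroup G} [N.Normal] (g : G) {v w : V} :
    orbit N (g • v) = orbit N (g • w) ↔ orbit N v = orbit N w := by
  rw [← smul_orbit_eq_orbit_smul, ← smul_orbit_eq_orbit_smul, smul_left_cancel_iff]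

theorem orbit_smul_of_mem {N : Subgroup G} {n : G} (hn : n ∈ N) (v : V) :
    orbit N (n • v) = orbit N v :=
  orbit_smul (⟨n, hn⟩ : N) v

theorem neighborSet_eq_of_smul_ne {A : Type*} [Group A] [MulAction A V]
    (hsmul : ∀ (a : A) (v w : V), Λ.Adj v w → Λ.Adj (a • v) (a • w)) {v w x : V}
    (hval : (Λ.neighborSet v).ncard = 4) (hw : Λ.Adj v w) (hx : Λ.Adj v x)
    (horb : orbit A w ≠ orbit A x) {a b : A} (hav : a • v = v) (haw : a • w ≠ w)
    (hbv : b • v = v) (hbx : b • x ≠ x) : Λ.neighborSet v = {w, a • w, x, b • x} := by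
  have hsub : ({w, a • w, x, b • x} : Set V) ⊆ Λ.neighborSet v := by
    rintro y (rfl | rfl | rfl | rfl)
    exacts [hw, hav ▸ hsmul a v w hw, hx, hbv ▸ hsmul b v x hx]
  refine (Set.eq_of_subset_of_ncard_le hsub ?_ (Set.finite_of_ncard_ne_zero (by omega))).symm
  have hne (c d : A) : c • w ≠ d • x := fun h => horb (by
    rw [← orbit_smul c w, h, orbit_smul])
  have hw_notMem : w ∉ ({a • w, x, b • x} : Set V) := by
    simpa [haw.symm] using And.intro (hne 1 1) (hne 1 b)
  have haw_notMem : a • w ∉ ({x, b • x} : Set V) := by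
    simpa using And.intro (hne a 1) (hne a b)
  rw [hval, Set.ncard_insert_of_notMem hw_notMem, Set.ncard_insert_of_notMem haw_notMem,
    Set.ncard_pair hbx.symm]

namespace IsArcTransitive

theorem exists_smul_ne (h : IsArcTransitive G Λ) (hΛ : Λ.Preconnected) {N : Subgroup G}
    [N.Normal] (hN : ∃ n ∈ N, ∃ v w : V, n • v = v ∧ n • w ≠ w) {v w : V} (hvw : Λ.Adj v w) :
    ∃ n : N, n • v = v ∧ n • w ≠ w := by
  by_contra! hfix
  obtain ⟨n, hn, x, y, hx, hy⟩ := hN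
  refine hy (forall_of_forall_adj (P := fun z => n • z = z) hΛ hx (fun a b hab ha => ?_) y)
  obtain ⟨g, rfl, rfl⟩ := h.exists_smul_eq hvw hab
  have hconj := hfix ⟨g⁻¹ * n * g, by simpa using Subgroup.Normal.conj_mem' ‹_› n hn g⟩
  simp only [Subgroup.mk_smul, mul_smul, inv_smul_eq_iff] at hconj
  exact hconj ha

theorem orbit_ne_orbit_of_adj (h : IsArcTransitive G Λ) (hΛ : Λ.Preconnected) {N : Subgroup G}
    [N.Normal] [IsMulCommutative N] (hN : ∃ n ∈ N, ∃ v w : V, n • v = v ∧ n • w ≠ w) {v w : V}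
    (hvw : Λ.Adj v w) : orbit N v ≠ orbit N w := by
  intro horb
  obtain ⟨n, hv, hw⟩ := h.exists_smul_ne hΛ hN hvw
  obtain ⟨m, rfl⟩ := orbit_eq_iff.1 horb.symm
  exact hw (by rw [← mul_smul, mul_comm, mul_smul, hv])

end IsArcTransitive

namespace IsRotatedAt

variable {N : Subgroup G} {g : G}

theorem smul [N.Normal] (hΛ : IsArcTransitive G Λ) {v : V} (hv : IsRotatedAt Λ N g v) {h : G}
    (hcomm : ∀ x : V, orbit N (h • g • x) = orbit N (g • h • x)) :
    IsRotatedAt Λ N g (h • v) where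
  orbit_cases w hw := by
    have hcases := hv.orbit_cases (h⁻¹ • w) ((hΛ.adj_smul_iff h).1 (by rwa [smul_inv_smul]))
    rwa [← orbit_smul_eq_orbit_smul_iff h, ← orbit_smul_eq_orbit_smul_iff h (v := g • _), hcomm,
      hcomm, smul_inv_smul] at hcases
  exists_succ := by
    obtain ⟨u, hvu, hu⟩ := hv.exists_succ
    exact ⟨h • u, (hΛ.adj_smul_iff h).2 hvu,
      by rw [← hcomm, orbit_smul_eq_orbit_smul_iff, hu]⟩
  exists_pred := by
    obtain ⟨x, hvx, hx⟩ := hv.exists_pred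
    exact ⟨h • x, (hΛ.adj_smul_iff h).2 hvx,
      by rw [← hcomm, orbit_smul_eq_orbit_smul_iff, hx]⟩

theorem smul_of_mem [N.Normal] (hΛ : IsArcTransitive G Λ) {v : V} (hv : IsRotatedAt Λ N g v)
    {n : G} (hn : n ∈ N) : IsRotatedAt Λ N g (n • v) :=
  hv.smul hΛ fun x => by
    rw [orbit_smul_of_mem hn, orbit_smul_eq_orbit_smul_iff, orbit_smul_of_mem hn]

theorem of_orbit_eq [N.Normal] (hΛ : IsArcTransitive G Λ) {v w : V}
    (hv : IsRotatedAt Λ N g v) (horb : orbit N w = orbit N v) : IsRotatedAt Λ N g w := by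
  obtain ⟨n, rfl⟩ := orbit_eq_iff.1 horb
  exact hv.smul_of_mem hΛ n.2

theorem of_adj [N.Normal] (hΛ : IsArcTransitive G Λ) {v w : V} (hv : IsRotatedAt Λ N g v)
    (hvw : Λ.Adj v w) : IsRotatedAt Λ N g w := by
  rcases hv.orbit_cases w hvw with hw | hw
  · exact (hv.smul hΛ fun _ => rfl).of_orbit_eq hΛ hw
  · have hgw := hv.of_orbit_eq hΛ hw
    rw [← inv_smul_smul g w]
    exact hgw.smul hΛ fun x => by rw [inv_smul_smul, smul_inv_smul]

theorem mem_orbit_zpowers [N.Normal] (hΛ : Λ.Preconnected) (hrot : ∀ v, IsRotatedAt Λ N g v)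
    (v₀ v : V) : orbit N v ∈ orbit (Subgroup.zpowers g) (orbit N v₀) := by
  refine forall_of_forall_adj
    (P := fun v => orbit N v ∈ orbit (Subgroup.zpowers g) (orbit N v₀)) hΛ
    (mem_orbit_self _) (fun x y hxy hx => ?_) v
  let γ : Subgroup.zpowers g := ⟨g, Subgroup.mem_zpowers g⟩
  rcases (hrot x).orbit_cases y hxy with hy | hy
  · rw [hy, ← smul_orbit_eq_orbit_smul]
    exact mem_orbit_of_mem_orbit γ hx
  · rw [← inv_smul_smul g (orbit N y), smul_orbit_eq_orbit_smul, hy]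
    exact mem_orbit_of_mem_orbit γ⁻¹ hx

end IsRotatedAt

end ArcTransitive

section Main

variable {G V : Type*} [Group G] [MulAction G V] {Λ : SimpleGraph V} {N : Subgroup G}

namespace IsArcTransitive

theorem isRotatedAt (h : IsArcTransitive G Λ) [N.Normal] {g : G} {v : V}
    (hval : (Λ.neighborSet (g • v)).ncard = 4) (hadj : Λ.Adj v (g • v))
    (hmove : ∀ v w, Λ.Adj v w → ∃ n : N, n • v = v ∧ n • w ≠ w)
    (horb : orbit N v ≠ orbit N (g • g • v)) : IsRotatedAt Λ N g (g • v) := by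
  have hsucc : Λ.Adj (g • v) (g • g • v) := (h.adj_smul_iff g).2 hadj
  refine ⟨fun w hw => ?_, ⟨_, hsucc, rfl⟩, ⟨v, hadj.symm, rfl⟩⟩
  obtain ⟨a, hav, ha⟩ := hmove _ _ hadj.symm
  obtain ⟨b, hbv, hb⟩ := hmove _ _ hsucc
  have hnhds := neighborSet_eq_of_smul_ne (fun (n : N) _ _ => (h.adj_smul_iff (n : G)).2) hval
    hadj.symm hsucc horb hav ha hbv hb
  rcases hnhds.subset hw with rfl | rfl | rfl | rfl
  · exact Or.inr rfl
  · exact Or.inr ((orbit_smul_eq_orbit_smul_iff g).2 (orbit_smul a v))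
  · exact Or.inl rfl
  · exact Or.inl (orbit_smul _ _)

theorem isCyclicFibration (h : IsArcTransitive G Λ) (hval : ∀ v, (Λ.neighborSet v).ncard = 4)
    (hmove : ∀ v w, Λ.Adj v w → ∃ n : N, n • v = v ∧ n • w ≠ w) {g : G}
    (hrot : ∀ v, IsRotatedAt Λ N g v) {r : ℕ} {π : V → ZMod r} (hsurj : π.Surjective)
    (hπg : ∀ v, π (g • v) = π v + 1) (hπ : ∀ v w, π v = π w ↔ orbit N v = orbit N w)
    (htwo : (2 : ZMod r) ≠ 0) : IsCyclicFibration N Λ π where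
  surjective := hsurj
  apply_eq_iff {v w} := by rw [hπ, eq_comm, orbit_eq_iff]; rfl
  adj_smul n _ _ := (h.adj_smul_iff (n : G)).2
  adj_cases {v w} hvw := by
    simp only [← hπg, hπ]
    exact ((hrot v).orbit_cases w hvw).imp_right Eq.symm
  exists_up v := by
    obtain ⟨u, hvu, hu⟩ := (hrot v).exists_succ
    obtain ⟨x, hvx, hx⟩ := (hrot v).exists_pred
    obtain ⟨a, hav, hau⟩ := hmove v u hvu
    obtain ⟨b, hbv, hbx⟩ := hmove v x hvx
    rw [← hπ, hπg] at hu hx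
    have hne : π x ≠ π v + 1 := fun hxv => htwo <| by
      rwa [← hx, add_assoc, one_add_one_eq_two, left_eq_add] at hxv
    have hnhds := neighborSet_eq_of_smul_ne (fun (n : N) _ _ => (h.adj_smul_iff (n : G)).2)
      (hval v) hvu hvx (fun horb => hne (((hπ u x).2 horb).symm.trans hu)) hav hau hbv hbx
    refine ⟨u, a, hvu, hu, hav, hau, fun w hw hπw => ?_⟩
    rcases hnhds.subset hw with hwu | hwu | rfl | rfl
    · exact Or.inl hwu
    · exact Or.inr hwu
    · exact absurd hπw hne
    · exact absurd (((hπ _ _).2 (orbit_smul b x)).symm.trans hπw) hne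

variable [N.Normal] [IsMulCommutative N] [Finite V]

theorem exists_nonempty_iso_PX_of_isRotatedAt (h : IsArcTransitive G Λ)
    (hΛ : Λ.Preconnected) (hval : ∀ v, (Λ.neighborSet v).ncard = 4)
    (hmove : ∀ v w, Λ.Adj v w → ∃ n : N, n • v = v ∧ n • w ≠ w)
    (hstab : ⨆ v : V, stabilizer N v = ⊤) {g : G} {v₀ : V} (hrot : IsRotatedAt Λ N g v₀)
    (horb : orbit N v₀ ≠ orbit N (g • g • v₀)) :
    ∃ r s : ℕ, 3 ≤ r ∧ 1 ≤ s ∧ s ≤ r - 1 ∧ Nonempty (Λ ≃g PX r s) := by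
  have hrot_all (v : V) : IsRotatedAt Λ N g v :=
    forall_of_forall_adj hΛ hrot (fun _ _ hvw hv => hv.of_adj h hvw) v
  obtain ⟨r, π, hsurj, hπg, hπ⟩ := exists_cyclic_labelling (p := fun v : V => orbit N v)
    (fun k v => (smul_orbit_eq_orbit_smul N v k).symm)
    (IsRotatedAt.mem_orbit_zpowers hΛ hrot_all v₀)
  have htwo : (2 : ZMod r) ≠ 0 := fun htwo => horb <| (hπ _ _).1 <| by
    rw [hπg, hπg, add_assoc, one_add_one_eq_two, htwo, add_zero]
  have hfinite := Finite.of_surjective π hsurj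
  have : NeZero r := ⟨by rintro rfl; exact not_finite (ZMod 0)⟩
  obtain ⟨s, hs, hsr, hiso⟩ :=
    (h.isCyclicFibration hval hmove hrot_all hsurj hπg hπ htwo).exists_nonempty_iso_PX
      (MulAction.injective g) (φ := MulAut.conjNormal g)
      (fun n v => by simp [Subgroup.smul_def, mul_smul]) hπg hstab
  exact ⟨r, s, three_le_of_two_ne_zero htwo, hs, Nat.le_sub_one_of_lt hsr, hiso⟩

theorem exists_nonempty_iso_PX_of_iSup_stabilizer (h : IsArcTransitive G Λ)
    (hΛ : Λ.Connected) (hval : ∀ v, (Λ.neighborSet v).ncard = 4)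
    (hN : ∃ n ∈ N, ∃ v w : V, n • v = v ∧ n • w ≠ w)
    (hstab : ⨆ v : V, stabilizer N v = ⊤) :
    ∃ r s : ℕ, 3 ≤ r ∧ 1 ≤ s ∧ s ≤ r - 1 ∧ Nonempty (Λ ≃g PX r s) := by
  have hmove (v w : V) (hvw : Λ.Adj v w) := h.exists_smul_ne hΛ.preconnected hN hvw
  by_cases hsame : ∀ x y z : V, Λ.Adj x y → Λ.Adj x z → orbit N y = orbit N z
  · obtain ⟨v⟩ := hΛ.nonempty
    have hnhds : (Λ.neighborSet v).Nonempty :=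
      Set.nonempty_of_ncard_ne_zero (by rw [hval]; exact four_ne_zero)
    obtain ⟨w, hvw⟩ := hnhds
    exact ⟨4, 1, by norm_num, le_rfl, by norm_num,
      nonempty_iso_PX_four_one (A := N) hΛ.preconnected hval
        (fun n _ _ => (h.adj_smul_iff (n : G)).2) hstab
        (fun _ _ => h.orbit_ne_orbit_of_adj hΛ.preconnected hN) hsame hvw⟩
  · push Not at hsame
    obtain ⟨_, v, _, hv, hw, horb⟩ := hsame
    obtain ⟨g, rfl, rfl⟩ := h.exists_smul_eq hv.symm hw
    refine h.exists_nonempty_iso_PX_of_isRotatedAt hΛ.preconnected hval hmove hstab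
      (h.isRotatedAt (hval _) hv.symm hmove horb) ?_
    rwa [Ne, orbit_smul_eq_orbit_smul_iff]

end IsArcTransitive

/-- The subgroup generated by the elements of `N` that fix a point of `V`. Passing to it makes the
abelian normal subgroup generated by its point stabilizers. -/
def pointStabilizerClosure (N : Subgroup G) (V : Type*) [MulAction G V] : Subgroup G :=
  Subgroup.closure {n | n ∈ N ∧ ∃ v : V, n • v = v}

theorem pointStabilizerClosure_le : pointStabilizerClosure N V ≤ N :=
  (Subgroup.closure_le N).2 fun _ h => h.1

instance pointStabilizerClosure_normal [N.Normal] : (pointStabilizerClosure N V).Normal where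
  conj_mem n hn g := by
    have hmap : (pointStabilizerClosure N V).map (MulAut.conj g).toMonoidHom ≤
        pointStabilizerClosure N V := by
      rw [pointStabilizerClosure, MonoidHom.map_closure, Subgroup.closure_le]
      rintro _ ⟨m, ⟨hm, v, hv⟩, rfl⟩
      exact Subgroup.subset_closure
        ⟨Subgroup.Normal.conj_mem ‹_› m hm g, g • v, by simp [mul_smul, hv]⟩
    exact hmap (Subgroup.mem_map_of_mem _ hn)

instance pointStabilizerClosure_isMulCommutative [IsMulCommutative N] :
    IsMulCommutative (pointStabilizerClosure N V) :=
  isMulCommutative_iff.2 fun a b => Subtype.ext <|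
    setLike_mul_comm (pointStabilizerClosure_le a.2) (pointStabilizerClosure_le b.2)

theorem iSup_stabilizer_pointStabilizerClosure :
    ⨆ v : V, stabilizer (pointStabilizerClosure N V) v = ⊤ := by
  rw [eq_top_iff]
  refine (Subgroup.closure_preimage_eq_top _).ge.trans ((Subgroup.closure_le _).2 ?_)
  rintro n ⟨-, v, hv⟩
  exact Subgroup.mem_iSup_of_mem v hv

theorem IsArcTransitive.exists_nonempty_iso_PX [N.Normal] [IsMulCommutative N] [Finite V]
    (h : IsArcTransitive G Λ) (hΛ : Λ.Connected) (hval : ∀ v, (Λ.neighborSet v).ncard = 4)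
    (hN : ∃ n ∈ N, ∃ v w : V, n • v = v ∧ n • w ≠ w) :
    ∃ r s : ℕ, 3 ≤ r ∧ 1 ≤ s ∧ s ≤ r - 1 ∧ Nonempty (Λ ≃g PX r s) := by
  obtain ⟨n, hn, v, w, hv, hw⟩ := hN
  exact h.exists_nonempty_iso_PX_of_iSup_stabilizer (N := pointStabilizerClosure N V) hΛ hval
    ⟨n, Subgroup.subset_closure ⟨hn, v, hv⟩, v, w, hv, hw⟩ iSup_stabilizer_pointStabilizerClosure

end Main

theorem stmt2 {V : Type} [Fintype V] (Λ : SimpleGraph V)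
    (hconn : Λ.Connected)
    (hval : ∀ v : V, (Λ.neighborSet v).ncard = 4)
    (G : Subgroup (Equiv.Perm V))
    (hAut : ∀ g ∈ G, ∀ u v : V, Λ.Adj (g u) (g v) ↔ Λ.Adj u v)
    (hArcTrans : ∀ u v u' v' : V, Λ.Adj u v → Λ.Adj u' v' →
      ∃ g ∈ G, g u = u' ∧ g v = v')
    (N : Subgroup (Equiv.Perm V)) (hNG : N ≤ G)
    (hNnormal : ∀ g ∈ G, ∀ n ∈ N, g * n * g⁻¹ ∈ N)
    (hNab : ∀ a ∈ N, ∀ b ∈ N, a * b = b * a)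
    (hNnotsemi : ¬ Semiregular N) :
    ∃ r s : ℕ, 3 ≤ r ∧ 1 ≤ s ∧ s ≤ r - 1 ∧ Nonempty (Λ ≃g PX r s) := by
  have harc : IsArcTransitive G Λ :=
    ⟨fun g => hAut g g.2 _ _, fun hvw hvw' => by
      obtain ⟨g, hg, hv, hw⟩ := hArcTrans _ _ _ _ hvw hvw'
      exact ⟨⟨g, hg⟩, hv, hw⟩⟩
  have : (N.subgroupOf G).Normal := ⟨fun n hn g => hNnormal g g.2 n hn⟩
  have : IsMulCommutative (N.subgroupOf G) :=
    isMulCommutative_iff.2 fun a b => Subtype.ext (Subtype.ext (hNab a a.2 b b.2))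
  have hmove : ∃ n ∈ N.subgroupOf G, ∃ v w : V, n • v = v ∧ n • w ≠ w := by
    simp only [Semiregular] at hNnotsemi
    push Not at hNnotsemi
    obtain ⟨n, hn, v, hv, hn_ne⟩ := hNnotsemi
    obtain ⟨w, hw⟩ := not_forall.1 (mt Equiv.ext hn_ne)
    exact ⟨⟨n, hNG hn⟩, hn, v, w, hv, hw⟩
  exact harc.exists_nonempty_iso_PX hconn hval hmove

end Stmt2
end

section
/- Let r ≥ 3 and 1 ≤ s ≤ r−1 be integers, and let C be an arc-transitive cycle decomposition of PX(2,r,s) all of whose cycles have length 4. Then there is an automorphism of PX(2,r,s) mapping C to the natural cycle decomposition of PX(2,r,s); that is, up to conjugacy in Aut(PX(2,r,s)), the natural cycle decomposition is the unique arc-transitive cycle decomposition of PX(2,r,s) into 4-cycles. -/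
/- STATEMENT 3:
Let r ≥ 3 and 1 ≤ s ≤ r−1, and let C be an arc-transitive cycle decomposition of
PX(2,r,s) all of whose cycles have length 4. Then some automorphism of PX(2,r,s) maps C
to the natural cycle decomposition of PX(2,r,s). -/

namespace Stmt3

/-- Vertex set of `PX(2,r,s)`: `ℤ₂ˢ × ℤᵣ`. -/
abbrev PXV (r s : ℕ) : Type := (Fin s → ZMod 2) × ZMod r

/-- The defining relation of `PX(2,r,s)`: `(n₀,…,n_{s−1},x)` is joined to
`(n₁,…,n_s,x+1)`. -/
def pxRel (r s : ℕ) (a b : PXV r s) : Prop :=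
  b.2 = a.2 + 1 ∧ ∀ (i : ℕ) (h : i + 1 < s), b.1 ⟨i, by omega⟩ = a.1 ⟨i + 1, h⟩

/-- The Praeger–Xu graph `PX(2,r,s)`. -/
def PX (r s : ℕ) : SimpleGraph (PXV r s) := SimpleGraph.fromRel (pxRel r s)

/-- A cycle in a graph: a connected subgraph that is regular of valency 2. -/
def IsCycleSubgraph {V : Type} {Λ : SimpleGraph V} (C : Λ.Subgraph) : Prop :=
  C.Connected ∧ ∀ v ∈ C.verts, (C.neighborSet v).ncard = 2

/-- `D` is the image of the subgraph `C` under the permutation `π`. -/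
def IsMapOf {V : Type} {Λ : SimpleGraph V} (π : Equiv.Perm V) (C D : Λ.Subgraph) : Prop :=
  D.verts = π '' C.verts ∧ ∀ u v, D.Adj u v ↔ C.Adj (π⁻¹ u) (π⁻¹ v)

/-- The word `(n₁,…,n_{s−1},b)` obtained from `n = (n₀,…,n_{s−1})` by shifting and
appending `b`. -/
def shiftTo {s : ℕ} (n : Fin s → ZMod 2) (b : ZMod 2) : Fin s → ZMod 2 :=
  fun i => if h : (i : ℕ) + 1 < s then n ⟨(i : ℕ) + 1, h⟩ else b

/-- The pair of vertices `{(0,n',x),(1,n',x)}` of the natural 4-cycle through `(n,x)`. -/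
def natLeft {r s : ℕ} (hs : 0 < s) (n : Fin s → ZMod 2) (x : ZMod r) : Set (PXV r s) :=
  {(n, x), (Function.update n ⟨0, hs⟩ (n ⟨0, hs⟩ + 1), x)}

/-- The pair of vertices `{(n',0,x+1),(n',1,x+1)}` of the natural 4-cycle through `(n,x)`. -/
def natRight {r s : ℕ} (n : Fin s → ZMod 2) (x : ZMod r) : Set (PXV r s) :=
  {(shiftTo n 0, x + 1), (shiftTo n 1, x + 1)}

/-- The natural cycle decomposition of `PX(2,r,s)`, consisting of the 4-cycles
`C_{n,x} = ((0,n,x),(n,0,x+1),(1,n,x),(n,1,x+1))` for `n ∈ ℤ₂^{s-1}` and `x ∈ ℤᵣ`. -/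
def NaturalDecomp (r s : ℕ) (hs : 0 < s) : Set ((PX r s).Subgraph) :=
  {D | ∃ (n : Fin s → ZMod 2) (x : ZMod r),
    D.verts = natLeft hs n x ∪ natRight n x ∧
    ∀ u v, D.Adj u v ↔
      ((u ∈ natLeft hs n x ∧ v ∈ natRight n x) ∨
       (v ∈ natLeft hs n x ∧ u ∈ natRight n x))}

/-!
Every edge of `PX(2,r,s)` joins two consecutive levels, and orienting the edges upwards gives a
line digraph. A 4-cycle is then either *alternating* (between two consecutive levels), *directed*
(winding once around the levels, so `r = 4`), or a *diamond* of two directed paths with common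
ends. The natural cycles are exactly the alternating 4-cycles, so it is enough to move all cycles
of the decomposition `𝒞` to alternating ones.

If `2 ≤ s` there are no diamonds, and by the line digraph property the type of a cycle of `𝒞`
propagates along arcs: either all cycles are alternating, or all are directed. In the latter case
`r = 4`, and `s ≤ 3`, because for `4 ≤ s` only one directed 4-cycle passes through each vertex,
whereas two arcs leave it. The graph `PX(2,4,2)` is the hypercube, where a permutation of the
coordinates makes the directed cycles alternating; for `PX(2,4,3)` the duality of the 4 × 4 grid on
the torus does.

If `s = 1` and `r ≠ 4`, arc-transitivity excludes diamonds. If `s = 1` and `r = 4`, the graph is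
`K₄,₄`, and counting the edges at two adjacent vertices shows that some vertex, hence by
transitivity every vertex, has the same antipode in both cycles through it; the antipodal
involution is conjugate to the swap of the two vertices on each level.
-/

section FourCycle

variable {V : Type} {Λ : SimpleGraph V} {C D : Λ.Subgraph} {u v w t v' w' t' : V}

/-- `C` is the 4-cycle `(u, v, w, t)`, encoded, as in `NaturalDecomp`, as the complete bipartite
graph between its antipodal pairs `{u, w}` and `{v, t}`. -/
structure IsFourCycle (C : Λ.Subgraph) (u v w t : V) : Prop where
  ne_left : u ≠ w
  ne_right : v ≠ t
  verts_eq : C.verts = {u, w} ∪ {v, t}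
  adj_iff : ∀ a b, C.Adj a b ↔
    ((a ∈ ({u, w} : Set V) ∧ b ∈ ({v, t} : Set V)) ∨
     (b ∈ ({u, w} : Set V) ∧ a ∈ ({v, t} : Set V)))

namespace IsFourCycle

lemma rotate (h : IsFourCycle C u v w t) : IsFourCycle C v w t u where
  ne_left := h.ne_right
  ne_right := h.ne_left.symm
  verts_eq := by rw [h.verts_eq, Set.union_comm, Set.pair_comm w u]
  adj_iff a b := by rw [h.adj_iff, Set.pair_comm w u]; tauto

lemma reflect (h : IsFourCycle C u v w t) : IsFourCycle C u t w v where
  ne_left := h.ne_left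
  ne_right := h.ne_right.symm
  verts_eq := by rw [h.verts_eq, Set.pair_comm t v]
  adj_iff a b := by rw [h.adj_iff, Set.pair_comm t v]

lemma neighborSet_eq (h : IsFourCycle C u v w t) : C.neighborSet u = {v, t} := by
  have hne : u ∉ ({v, t} : Set V) := fun hu ↦
    C.loopless.irrefl u ((h.adj_iff u u).2 (.inl ⟨.inl rfl, hu⟩))
  ext b
  simp [SimpleGraph.Subgraph.mem_neighborSet, h.adj_iff, hne]

lemma adj (h : IsFourCycle C u v w t) : C.Adj u v :=
  (h.adj_iff u v).2 (.inl ⟨.inl rfl, .inl rfl⟩)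

lemma eq_or_eq_of_adj (h : IsFourCycle C u v w t) {b : V} (hb : C.Adj u b) : b = v ∨ b = t := by
  have : b ∈ C.neighborSet u := hb
  rwa [h.neighborSet_eq] at this

lemma antipode_unique (h : IsFourCycle C u v w t) (h' : IsFourCycle C u v' w' t') : w = w' := by
  have hv : C.Adj v' w := by
    rcases h.eq_or_eq_of_adj h'.adj with rfl | rfl
    exacts [h.rotate.adj, h.reflect.rotate.adj]
  exact (h'.reflect.rotate.rotate.rotate.eq_or_eq_of_adj hv).resolve_left h.ne_left.symm

lemma ext (hC : IsFourCycle C u v w t) (hD : IsFourCycle D u v w t) : C = D :=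
  SimpleGraph.Subgraph.ext (hC.verts_eq.trans hD.verts_eq.symm)
    (by ext a b; rw [hC.adj_iff, hD.adj_iff])

lemma map (h : IsFourCycle C u v w t) {π : Equiv.Perm V} (hD : IsMapOf π C D) :
    IsFourCycle D (π u) (π v) (π w) (π t) where
  ne_left := π.injective.ne h.ne_left
  ne_right := π.injective.ne h.ne_right
  verts_eq := by rw [hD.1, h.verts_eq, Set.image_union, Set.image_pair, Set.image_pair]
  adj_iff a b := by
    rw [hD.2, h.adj_iff]
    simp only [Set.mem_insert_iff, Set.mem_singleton_iff, Equiv.Perm.inv_eq_iff_eq]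

end IsFourCycle

lemma neighborSet_eq_pair (hu : (C.neighborSet u).ncard = 2) (hv : C.Adj u v) (ht : C.Adj u t)
    (hvt : v ≠ t) : C.neighborSet u = {v, t} := by
  refine (Set.eq_of_subset_of_ncard_le (t := C.neighborSet u) (Set.pair_subset hv ht) ?_
    (Set.finite_of_ncard_ne_zero (by omega))).symm
  rw [hu, Set.ncard_pair hvt]

lemma exists_verts_eq_of_ncard_eq_four (hcard : C.verts.ncard = 4) (hv : C.Adj u v)
    (ht : C.Adj u t) (hvt : v ≠ t) : ∃ w ∉ ({u, v, t} : Set V), C.verts = {u, w} ∪ {v, t} := by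
  have hfin : C.verts.Finite := Set.finite_of_ncard_ne_zero (by omega)
  have hcard' : ({u, v, t} : Set V).ncard = 3 :=
    Set.ncard_eq_three.2 ⟨u, v, t, hv.ne, ht.ne, hvt, rfl⟩
  obtain ⟨w, hw, hwn⟩ : ∃ w ∈ C.verts, w ∉ ({u, v, t} : Set V) :=
    Set.exists_mem_notMem_of_ncard_lt_ncard (by omega)
  have heq : ({u, w} ∪ {v, t} : Set V) = insert w {u, v, t} := by
    ext; simp only [Set.mem_union, Set.mem_insert_iff, Set.mem_singleton_iff]; tauto
  refine ⟨w, hwn, ?_⟩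
  rw [heq]
  refine (Set.eq_of_subset_of_ncard_le ?_ ?_ hfin).symm
  · rintro x (rfl | rfl | rfl | rfl)
    exacts [hw, C.edge_vert hv, C.edge_vert hv.symm, C.edge_vert ht.symm]
  · rw [Set.ncard_insert_of_notMem hwn, hcard, hcard']

lemma exists_isFourCycle_of_adj (hdeg : ∀ a ∈ C.verts, (C.neighborSet a).ncard = 2)
    (hcard : C.verts.ncard = 4) (huv : C.Adj u v) : ∃ w t, IsFourCycle C u v w t := by
  obtain ⟨t, hut : C.Adj u t, htv⟩ := Set.exists_ne_of_one_lt_ncard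
    (s := C.neighborSet u) (by rw [hdeg u (C.edge_vert huv)]; norm_num) v
  have hu := neighborSet_eq_pair (hdeg u (C.edge_vert huv)) huv hut htv.symm
  obtain ⟨w, hwn, hverts⟩ := exists_verts_eq_of_ncard_eq_four hcard huv hut htv.symm
  have huw : u ≠ w := fun h ↦ hwn (.inl h.symm)
  have hmem {a : V} (ha : a ∈ C.verts) : (a = u ∨ a = w) ∨ a = v ∨ a = t := by rwa [hverts] at ha
  have hw : C.neighborSet w = {v, t} := by
    refine Set.eq_of_subset_of_ncard_le (s := C.neighborSet w) (fun b (hb : C.Adj w b) ↦ ?_) ?_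
    · rcases hmem (C.edge_vert hb.symm) with (rfl | rfl) | hb'
      · exact absurd (.inr (hu.subset hb.symm)) hwn
      · exact absurd rfl hb.ne
      · exact hb'
    · rw [hdeg w (hverts.superset (.inl (.inr rfl))), Set.ncard_pair htv.symm]
  have hnbr {b : V} (hb : b ∈ ({v, t} : Set V)) : C.neighborSet b = {u, w} := by
    have hub : C.Adj u b := hu.superset hb
    have hwb : C.Adj w b := hw.superset hb
    exact neighborSet_eq_pair (hdeg b (C.edge_vert hub.symm)) hub.symm hwb.symm huw
  refine ⟨w, t, huw, htv.symm, hverts, fun a b ↦ ⟨fun hab ↦ ?_, ?_⟩⟩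
  · rcases hmem (C.edge_vert hab) with (rfl | rfl) | ha
    exacts [.inl ⟨.inl rfl, hu.subset hab⟩, .inl ⟨.inr rfl, hw.subset hab⟩,
      .inr ⟨(hnbr ha).subset hab, ha⟩]
  · rintro (⟨rfl | rfl, hb⟩ | ⟨hb, ha⟩)
    exacts [hu.superset hb, hw.superset hb, (hnbr ha).superset hb]

end FourCycle

section Decomposition

variable {V : Type} {Λ : SimpleGraph V} {𝒞 : Set Λ.Subgraph} {C D : Λ.Subgraph}
  {u v w t w' t' : V} {π : Equiv.Perm V}

/-- `π` is an automorphism of the graph `Λ`. -/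
def IsAut (Λ : SimpleGraph V) (π : Equiv.Perm V) : Prop :=
  ∀ u v, Λ.Adj (π u) (π v) ↔ Λ.Adj u v

/-- `𝒞` is a decomposition of the edges of `Λ` into cycles of length 4. -/
structure IsFourCycleDecomp (𝒞 : Set Λ.Subgraph) : Prop where
  isCycleSubgraph : ∀ C ∈ 𝒞, IsCycleSubgraph C ∧ C.verts.ncard = 4
  existsUnique_adj : ∀ u v : V, Λ.Adj u v → ∃! C, C ∈ 𝒞 ∧ C.Adj u v

/-- Some arc-transitive group of automorphisms of `Λ` preserves the set `𝒞` of subgraphs. -/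
def IsArcTransitive (𝒞 : Set Λ.Subgraph) : Prop :=
  ∃ G : Subgroup (Equiv.Perm V), (∀ g ∈ G, IsAut Λ g) ∧
    (∀ u v u' v' : V, Λ.Adj u v → Λ.Adj u' v' → ∃ g ∈ G, g u = u' ∧ g v = v') ∧
    (∀ g ∈ G, ∀ C ∈ 𝒞, ∃ D ∈ 𝒞, IsMapOf g C D)

lemma IsAut.symm (h : IsAut Λ π) : IsAut Λ π⁻¹ := fun u v ↦ by
  simpa using (h (π⁻¹ u) (π⁻¹ v)).symm

lemma IsAut.exists_isMapOf (h : IsAut Λ π) (C : Λ.Subgraph) : ∃ D : Λ.Subgraph, IsMapOf π C D :=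
  ⟨{verts := π '' C.verts
    Adj := fun u v ↦ C.Adj (π⁻¹ u) (π⁻¹ v)
    adj_sub := fun huv ↦ (h.symm _ _).1 huv.adj_sub
    edge_vert := fun {u _} huv ↦ ⟨π⁻¹ u, C.edge_vert huv, by simp⟩
    symm := ⟨fun _ _ huv ↦ huv.symm⟩}, rfl, fun _ _ ↦ Iff.rfl⟩

lemma IsMapOf.adj (h : IsMapOf π C D) (huv : C.Adj u v) : D.Adj (π u) (π v) := by
  simpa [h.2] using huv

namespace IsFourCycleDecomp

lemma eq_of_adj (h : IsFourCycleDecomp 𝒞) (hC : C ∈ 𝒞) (hD : D ∈ 𝒞) (hCuv : C.Adj u v)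
    (hDuv : D.Adj u v) : C = D :=
  (h.existsUnique_adj u v hCuv.adj_sub).unique ⟨hC, hCuv⟩ ⟨hD, hDuv⟩

lemma isFourCycle_of_adj (h : IsFourCycleDecomp 𝒞) (hC : C ∈ 𝒞) (huv : C.Adj u v) :
    ∃ w t, IsFourCycle C u v w t :=
  have hcyc := h.isCycleSubgraph C hC
  exists_isFourCycle_of_adj hcyc.1.2 hcyc.2 huv

lemma exists_isFourCycle (h : IsFourCycleDecomp 𝒞) (huv : Λ.Adj u v) :
    ∃ C ∈ 𝒞, ∃ w t, IsFourCycle C u v w t :=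
  have ⟨C, ⟨hC, hCuv⟩, _⟩ := h.existsUnique_adj u v huv
  ⟨C, hC, h.isFourCycle_of_adj hC hCuv⟩

lemma exists_adj (h : IsFourCycleDecomp 𝒞) (hC : C ∈ 𝒞) : ∃ u v, C.Adj u v := by
  obtain ⟨⟨hconn, hdeg⟩, -⟩ := h.isCycleSubgraph C hC
  obtain ⟨u, hu⟩ := hconn.nonempty
  obtain ⟨v, hv⟩ := Set.nonempty_of_ncard_ne_zero (s := C.neighborSet u) (by rw [hdeg u hu]; simp)
  exact ⟨u, v, hv⟩

lemma eq_of_isFourCycle (h : IsFourCycleDecomp 𝒞) (hC : C ∈ 𝒞) (hD : D ∈ 𝒞)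
    (hCu : IsFourCycle C u v w t) (hDu : IsFourCycle D u v w' t') : w = w' ∧ t = t' := by
  obtain rfl := h.eq_of_adj hC hD hCu.adj hDu.adj
  exact ⟨hCu.antipode_unique hDu, hCu.rotate.reflect.antipode_unique hDu.rotate.reflect⟩

end IsFourCycleDecomp

end Decomposition

section PraegerXu

variable {r s : ℕ} {u v w t x : PXV r s}

lemma mem_natRight_iff : v ∈ natRight u.1 u.2 ↔ pxRel r s u v := by
  have hlast : v ∈ natRight u.1 u.2 ↔ ∃ b, v = (shiftTo u.1 b, u.2 + 1) :=
    (Fin.exists_fin_two (p := fun b ↦ v = (shiftTo u.1 b, u.2 + 1))).symm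
  rw [hlast]
  constructor
  · rintro ⟨b, rfl⟩
    exact ⟨rfl, fun i hi ↦ by simp [shiftTo, hi]⟩
  · intro ⟨hlevel, hword⟩
    rcases s with _ | s
    · exact ⟨0, Prod.ext (Subsingleton.elim _ _) hlevel⟩
    refine ⟨v.1 (Fin.last s), Prod.ext (funext fun i ↦ ?_) hlevel⟩
    rcases i.eq_castSucc_or_eq_last with ⟨j, rfl⟩ | rfl
    · exact (hword j (by omega)).trans (by simp [shiftTo])
    · simp [shiftTo]

lemma mem_natLeft_iff (hs : 0 < s) (huv : pxRel r s u v) :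
    w ∈ natLeft hs u.1 u.2 ↔ pxRel r s w v := by
  constructor
  · rintro (rfl | rfl)
    exacts [huv, ⟨huv.1, fun i hi ↦ (huv.2 i hi).trans (by simp)⟩]
  · intro hwv
    have hlevel : w.2 = u.2 := add_right_cancel (hwv.1.symm.trans huv.1)
    have hword (i : Fin s) (hi : i ≠ ⟨0, hs⟩) : w.1 i = u.1 i := by
      obtain ⟨_ | i, h⟩ := i
      · exact absurd rfl hi
      · exact (hwv.2 i h).symm.trans (huv.2 i h)
    have hfirst : ∀ a b : ZMod 2, b = a ∨ b = a + 1 := by decide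
    refine (hfirst (u.1 ⟨0, hs⟩) (w.1 ⟨0, hs⟩)).imp (fun h ↦ ?_) fun h ↦ ?_ <;>
      refine Prod.ext (funext fun i ↦ ?_) hlevel <;> by_cases hi : i = ⟨0, hs⟩
    · rw [hi, h]
    · exact hword i hi
    · simpa [hi] using h
    · simpa [hi] using hword i hi

lemma pair_eq_of_mem_pair {α : Type*} {a b c d : α} (hc : c ∈ ({a, b} : Set α))
    (hd : d ∈ ({a, b} : Set α)) (hcd : c ≠ d) : ({a, b} : Set α) = {c, d} := by
  rcases hc with rfl | rfl <;> rcases hd with rfl | rfl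
  exacts [absurd rfl hcd, rfl, Set.pair_comm _ _, absurd rfl hcd]

lemma natRight_eq_pair (huv : pxRel r s u v) (hut : pxRel r s u t) (hvt : v ≠ t) :
    natRight u.1 u.2 = {v, t} :=
  pair_eq_of_mem_pair (mem_natRight_iff.2 huv) (mem_natRight_iff.2 hut) hvt

lemma natLeft_eq_pair (hs : 0 < s) (huv : pxRel r s u v) (hwv : pxRel r s w v) (huw : u ≠ w) :
    natLeft hs u.1 u.2 = {u, w} :=
  pair_eq_of_mem_pair ((mem_natLeft_iff hs huv).2 huv) ((mem_natLeft_iff hs huv).2 hwv) huw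

lemma exists_pxRel_pair (hs : 0 < s) (u : PXV r s) :
    ∃ v t, v ≠ t ∧ pxRel r s u v ∧ pxRel r s u t := by
  refine ⟨(shiftTo u.1 0, u.2 + 1), (shiftTo u.1 1, u.2 + 1), fun h ↦ ?_,
    mem_natRight_iff.1 (.inl rfl), mem_natRight_iff.1 (.inr rfl)⟩
  have := congrFun (congrArg Prod.fst h) ⟨s - 1, by omega⟩
  simp [shiftTo, show ¬ s - 1 + 1 < s by omega] at this

lemma pxRel.eq_or_eq_of_left (huv : pxRel r s u v) (hut : pxRel r s u t) (hvt : v ≠ t)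
    (hux : pxRel r s u x) : x = v ∨ x = t :=
  (natRight_eq_pair huv hut hvt).subset (mem_natRight_iff.2 hux)

lemma pxRel.eq_or_eq_of_right (hs : 0 < s) (huv : pxRel r s u v) (hwv : pxRel r s w v)
    (huw : u ≠ w) (hxv : pxRel r s x v) : x = u ∨ x = w :=
  (natLeft_eq_pair hs huv hwv huw).subset ((mem_natLeft_iff hs huv).2 hxv)

/- The arcs of `PX(2,r,s)` from level to level form a line digraph: two vertices with a common
out-neighbour have the same out-neighbours. -/
lemma pxRel.trans_symm (huv : pxRel r s u v) (hut : pxRel r s u t) (hwv : pxRel r s w v) :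
    pxRel r s w t := by
  refine ⟨hut.1.trans (huv.1.symm.trans hwv.1), fun i hi ↦ ?_⟩
  rw [hut.2 i hi, ← huv.2 i hi, hwv.2 i hi]

lemma natCast_ne_zero_of_lt {n : ℕ} (hn : n ≠ 0) (hnr : n < r) : (n : ZMod r) ≠ 0 := by
  rw [Ne, ZMod.natCast_eq_zero_iff]
  exact Nat.not_dvd_of_pos_of_lt (Nat.pos_of_ne_zero hn) hnr

lemma eq_four_of_four_eq_zero (hr : 3 ≤ r) (h : (4 : ZMod r) = 0) : r = 4 := by
  have hdvd : r ∣ 4 := (ZMod.natCast_eq_zero_iff 4 r).1 (mod_cast h)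
  have := Nat.le_of_dvd (by norm_num) hdvd
  interval_cases r
  · omega
  · rfl

lemma not_pxRel_symm (hr : 3 ≤ r) (huv : pxRel r s u v) : ¬ pxRel r s v u := fun hvu ↦
  natCast_ne_zero_of_lt two_ne_zero hr (by push_cast; linear_combination -huv.1 - hvu.1)

lemma not_pxRel_of_path (hr : 3 ≤ r) (huv : pxRel r s u v) (hvw : pxRel r s v w)
    (hwt : pxRel r s w t) : ¬ pxRel r s u t := fun hut ↦
  natCast_ne_zero_of_lt two_ne_zero hr
    (by push_cast; linear_combination hut.1 - huv.1 - hvw.1 - hwt.1)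

lemma PX_adj (hr : 3 ≤ r) : (PX r s).Adj u v ↔ pxRel r s u v ∨ pxRel r s v u := by
  rw [PX, SimpleGraph.fromRel_adj, and_iff_right_iff_imp]
  rintro h rfl
  rcases h with h | h <;> exact not_pxRel_symm hr h h

end PraegerXu

section Orientation

variable {r s : ℕ} {u v w t : PXV r s} {C D : (PX r s).Subgraph}

/-- The vertices of the 4-cycle `(u, v, w, t)` alternate between two consecutive levels, and every
edge goes up from `{u, w}` to `{v, t}`. -/
def IsAlternating (u v w t : PXV r s) : Prop :=
  pxRel r s u v ∧ pxRel r s w v ∧ pxRel r s w t ∧ pxRel r s u t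

/-- The 4-cycle `(u, v, w, t)` is a directed cycle of the relation `pxRel`, winding once around
the levels. -/
def IsDirected (u v w t : PXV r s) : Prop :=
  pxRel r s u v ∧ pxRel r s v w ∧ pxRel r s w t ∧ pxRel r s t u

/-- The 4-cycle `(u, v, w, t)` consists of two directed paths of length 2 from `u` to `w`. -/
def IsDiamond (u v w t : PXV r s) : Prop :=
  pxRel r s u v ∧ pxRel r s v w ∧ pxRel r s u t ∧ pxRel r s t w

lemma IsAlternating.half_turn (h : IsAlternating u v w t) : IsAlternating w t u v :=
  ⟨h.2.2.1, h.2.2.2, h.1, h.2.1⟩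

lemma IsAlternating.reflect (h : IsAlternating u v w t) : IsAlternating u t w v :=
  ⟨h.2.2.2, h.2.2.1, h.2.1, h.1⟩

lemma IsFourCycle.isAlternating_or_isDirected_or_isDiamond (hr : 3 ≤ r)
    (hC : IsFourCycle C u v w t) (huv : pxRel r s u v) :
    IsAlternating u v w t ∨ IsDirected u v w t ∨ IsDiamond u v w t ∨ IsDiamond t u v w := by
  have hvw := (PX_adj hr).1 hC.rotate.adj.adj_sub
  have hwt := (PX_adj hr).1 hC.rotate.rotate.adj.adj_sub
  have htu := (PX_adj hr).1 hC.reflect.adj.symm.adj_sub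
  rcases hvw with hvw | hwv <;> rcases hwt with hwt | htw <;> rcases htu with htu | hut
  · exact .inr (.inl ⟨huv, hvw, hwt, htu⟩)
  · exact absurd hut (not_pxRel_of_path hr huv hvw hwt)
  · exact absurd htw (not_pxRel_of_path hr htu huv hvw)
  · exact .inr (.inr (.inl ⟨huv, hvw, hut, htw⟩))
  · exact absurd hwv (not_pxRel_of_path hr hwt htu huv)
  · exact .inl ⟨huv, hwv, hwt, hut⟩
  · exact .inr (.inr (.inr ⟨htu, huv, htw, hwv⟩))
  · exact absurd huv (not_pxRel_of_path hr hut htw hwv)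

lemma IsDirected.eq_four (hr : 3 ≤ r) (h : IsDirected u v w t) : r = 4 := by
  obtain ⟨⟨huv, -⟩, ⟨hvw, -⟩, ⟨hwt, -⟩, htu, -⟩ := h
  exact eq_four_of_four_eq_zero hr (by linear_combination -huv - hvw - hwt - htu)

lemma IsDiamond.middle_eq (hs : 2 ≤ s) (h : IsDiamond u v w t) : v = t := by
  obtain ⟨huv, hvw, hut, htw⟩ := h
  refine Prod.ext (funext fun ⟨i, hi⟩ ↦ ?_) (huv.1.trans hut.1.symm)
  rcases i with _ | i
  · exact (huv.2 0 hs).trans (hut.2 0 hs).symm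
  · exact (hvw.2 i hi).symm.trans (htw.2 i hi)

lemma IsFourCycle.isAlternating_or_isDirected (hr : 3 ≤ r) (hs : 2 ≤ s)
    (hC : IsFourCycle C u v w t) (huv : pxRel r s u v) :
    IsAlternating u v w t ∨ IsDirected u v w t := by
  rcases hC.isAlternating_or_isDirected_or_isDiamond hr huv with h | h | h | h
  · exact .inl h
  · exact .inr h
  · exact absurd (h.middle_eq hs) hC.ne_right
  · exact absurd (h.middle_eq hs) hC.ne_left

/-- `C` is a 4-cycle between two consecutive levels of `PX(2,r,s)`. -/
def IsAlternatingCycle (C : (PX r s).Subgraph) : Prop :=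
  ∃ u v w t, IsFourCycle C u v w t ∧ IsAlternating u v w t

lemma exists_isFourCycle_pxRel (hr : 3 ≤ r) {𝒞 : Set (PX r s).Subgraph}
    (h𝒞 : IsFourCycleDecomp 𝒞) (hC : C ∈ 𝒞) :
    ∃ u v w t, IsFourCycle C u v w t ∧ pxRel r s u v := by
  obtain ⟨u, v, huv⟩ := h𝒞.exists_adj hC
  rcases (PX_adj hr).1 huv.adj_sub with h | h
  · obtain ⟨w, t, hC⟩ := h𝒞.isFourCycle_of_adj hC huv
    exact ⟨u, v, w, t, hC, h⟩
  · obtain ⟨w, t, hC⟩ := h𝒞.isFourCycle_of_adj hC huv.symm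
    exact ⟨v, u, w, t, hC, h⟩

lemma mem_naturalDecomp_iff (hs : 0 < s) : D ∈ NaturalDecomp r s hs ↔ IsAlternatingCycle D := by
  constructor
  · rintro ⟨n, x, hverts, hadj⟩
    obtain ⟨v, t, hvt, hv, ht⟩ := exists_pxRel_pair hs (n, x)
    set w : PXV r s := (Function.update n ⟨0, hs⟩ (n ⟨0, hs⟩ + 1), x)
    have hnw : ((n, x) : PXV r s) ≠ w := fun h ↦ by
      simpa [w] using congrFun (congrArg Prod.fst h) ⟨0, hs⟩
    have hwv : pxRel r s w v := (mem_natLeft_iff hs hv).1 (.inr rfl)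
    rw [natRight_eq_pair hv ht hvt] at hverts hadj
    exact ⟨(n, x), v, w, t, ⟨hnw, hvt, hverts, hadj⟩, hv, hwv, hv.trans_symm ht hwv, ht⟩
  · rintro ⟨u, v, w, t, hD, huv, hwv, -, hut⟩
    refine ⟨u.1, u.2, ?_⟩
    rw [natLeft_eq_pair hs huv hwv hD.ne_left, natRight_eq_pair huv hut hD.ne_right]
    exact ⟨hD.verts_eq, hD.adj_iff⟩

/-- Some automorphism of `PX(2,r,s)` maps `𝒞` onto the natural cycle decomposition. -/
def IsConjugateToNatural (hs : 0 < s) (𝒞 : Set (PX r s).Subgraph) : Prop :=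
  ∃ π : Equiv.Perm (PXV r s), IsAut (PX r s) π ∧
    ∀ D : (PX r s).Subgraph, (∃ C ∈ 𝒞, IsMapOf π C D) ↔ D ∈ NaturalDecomp r s hs

lemma IsAlternatingCycle.exists_isAlternating (hr : 3 ≤ r) (hC : IsAlternatingCycle C)
    (hCuv : C.Adj u v) (huv : pxRel r s u v) :
    ∃ w t, IsFourCycle C u v w t ∧ IsAlternating u v w t := by
  obtain ⟨a, b, c, d, hC, habcd⟩ := hC
  rcases (hC.adj_iff u v).1 hCuv with ⟨rfl | rfl, rfl | rfl⟩ | ⟨hv, hu⟩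
  · exact ⟨_, _, hC, habcd⟩
  · exact ⟨_, _, hC.reflect, habcd.reflect⟩
  · exact ⟨_, _, hC.rotate.rotate.reflect, habcd.half_turn.reflect⟩
  · exact ⟨_, _, hC.rotate.rotate, habcd.half_turn⟩
  · obtain ⟨hab, hcb, hcd, had⟩ := habcd
    rcases hv with rfl | rfl <;> rcases hu with rfl | rfl <;>
      exact absurd huv (not_pxRel_symm hr ‹_›)

lemma IsAlternatingCycle.eq_of_adj (hr : 3 ≤ r) (hs : 0 < s) (hC : IsAlternatingCycle C)
    (hD : IsAlternatingCycle D) (hCuv : C.Adj u v) (hDuv : D.Adj u v) : C = D := by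
  wlog huv : pxRel r s u v generalizing u v
  · exact this hCuv.symm hDuv.symm (((PX_adj hr).1 hCuv.adj_sub).resolve_left huv)
  obtain ⟨w, t, hC, -, hwv, -, hut⟩ := hC.exists_isAlternating hr hCuv huv
  obtain ⟨w', t', hD, -, hwv', -, hut'⟩ := hD.exists_isAlternating hr hDuv huv
  obtain rfl := (pxRel.eq_or_eq_of_right hs huv hwv hC.ne_left hwv').resolve_left hD.ne_left.symm
  obtain rfl := (huv.eq_or_eq_of_left hut hC.ne_right hut').resolve_left hD.ne_right.symm
  exact hC.ext hD

lemma isConjugateToNatural_of_isAut (hr : 3 ≤ r) (hs : 0 < s) {𝒞 : Set (PX r s).Subgraph}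
    (h𝒞 : IsFourCycleDecomp 𝒞) {π : Equiv.Perm (PXV r s)} (hπ : IsAut (PX r s) π)
    (h : ∀ C ∈ 𝒞, ∃ u v w t, IsFourCycle C u v w t ∧ IsAlternating (π u) (π v) (π w) (π t)) :
    IsConjugateToNatural hs 𝒞 := by
  have himage {C D : (PX r s).Subgraph} (hC : C ∈ 𝒞) (hCD : IsMapOf π C D) :
      IsAlternatingCycle D :=
    have ⟨u, v, w, t, hC, hπC⟩ := h C hC
    ⟨π u, π v, π w, π t, hC.map hCD, hπC⟩
  refine ⟨π, hπ, fun D ↦ ?_⟩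
  rw [mem_naturalDecomp_iff hs]
  refine ⟨fun ⟨C, hC, hCD⟩ ↦ himage hC hCD, fun hD ↦ ?_⟩
  obtain ⟨u, v, w, t, hDuv, -⟩ := id hD
  obtain ⟨C, ⟨hC, hCuv⟩, -⟩ :=
    h𝒞.existsUnique_adj _ _ ((hπ.symm u v).2 hDuv.adj.adj_sub)
  obtain ⟨D', hCD'⟩ := hπ.exists_isMapOf C
  obtain rfl : D' = D :=
    (himage hC hCD').eq_of_adj hr hs hD (by simpa using hCD'.adj hCuv) hDuv.adj
  exact ⟨C, hC, hCD'⟩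

lemma isConjugateToNatural_of_isAlternatingCycle (hr : 3 ≤ r) (hs : 0 < s)
    {𝒞 : Set (PX r s).Subgraph} (h𝒞 : IsFourCycleDecomp 𝒞)
    (h : ∀ C ∈ 𝒞, IsAlternatingCycle C) : IsConjugateToNatural hs 𝒞 :=
  isConjugateToNatural_of_isAut hr hs h𝒞 (π := 1) (fun _ _ ↦ Iff.rfl) h

end Orientation

section Propagation

variable {r s : ℕ} {𝒞 : Set (PX r s).Subgraph} {C D : (PX r s).Subgraph} {u v w t x y z : PXV r s}

lemma pxRel_window (f : ℕ → ZMod 2) (x : ZMod r) (k : ℕ) :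
    pxRel r s (fun i ↦ f (k + i), x + k) (fun i ↦ f (k + 1 + i), x + (k + 1 : ℕ)) :=
  ⟨by push_cast; ring, fun i _ ↦ congrArg f (by ring)⟩

/- Slide a window of length `s` along a sequence starting with the word of `a` and, a multiple of
`r` levels further on, continuing with the word of `b`. -/
lemma reflTransGen_pxRel [NeZero r] (a b : PXV r s) : Relation.ReflTransGen (pxRel r s) a b := by
  let N := (b.2 - a.2).val + r * s
  have hN : s ≤ N := (Nat.le_mul_of_pos_left s (NeZero.pos r)).trans (Nat.le_add_left _ _)
  let f : ℕ → ZMod 2 := fun k ↦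
    if h : k < s then a.1 ⟨k, h⟩ else if h : k - N < s then b.1 ⟨k - N, h⟩ else 0
  have hwindow (k : ℕ) : Relation.ReflTransGen (pxRel r s) (fun i ↦ f (0 + i), a.2 + (0 : ℕ))
      (fun i ↦ f (k + i), a.2 + k) := by
    induction k with
    | zero => exact .refl
    | succ k ih => exact ih.tail (pxRel_window f a.2 k)
  convert hwindow N using 1
  · ext i
    · simp [f]
    · simp
  · ext i
    · have : ¬ N + i < s := by omega
      simp [f, this]
    · simp [N]

lemma IsAlternating.of_pxRel (hr : 3 ≤ r) (hs : 2 ≤ s) (h𝒞 : IsFourCycleDecomp 𝒞) (hC : C ∈ 𝒞)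
    (hD : D ∈ 𝒞) (hCu : IsFourCycle C u v w t) (huv : IsAlternating u v w t)
    (hDv : IsFourCycle D v x y z) (hvx : pxRel r s v x) : IsAlternating v x y z := by
  refine (hDv.isAlternating_or_isDirected hr hs hvx).resolve_right fun ⟨_, _, _, hzv⟩ ↦ ?_
  have hCv : C.Adj v z := by
    rcases huv.1.eq_or_eq_of_right (by omega) huv.2.1 hCu.ne_left hzv with rfl | rfl
    exacts [hCu.adj.symm, hCu.rotate.adj]
  obtain rfl := h𝒞.eq_of_adj hC hD hCv hDv.reflect.adj
  rcases hCu.rotate.eq_or_eq_of_adj hDv.adj with rfl | rfl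
  exacts [not_pxRel_symm hr hvx huv.2.1, not_pxRel_symm hr hvx huv.1]

/-- Every cycle of `𝒞` is a directed cycle of the relation `pxRel`. -/
def HasDirectedCycles (𝒞 : Set (PX r s).Subgraph) : Prop :=
  ∀ ⦃C⦄, C ∈ 𝒞 → ∀ ⦃u v w t⦄, IsFourCycle C u v w t → pxRel r s u v → IsDirected u v w t

lemma IsFourCycleDecomp.forall_isAlternatingCycle_or_hasDirectedCycles (hr : 3 ≤ r) (hs : 2 ≤ s)
    (h𝒞 : IsFourCycleDecomp 𝒞) :
    (∀ C ∈ 𝒞, IsAlternatingCycle C) ∨ HasDirectedCycles 𝒞 := by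
  refine or_iff_not_imp_right.2 fun h ↦ ?_
  simp only [HasDirectedCycles] at h
  push Not at h
  obtain ⟨C, hC, u, v, w, t, hCu, huv, hnot⟩ := h
  have halt := (hCu.isAlternating_or_isDirected hr hs huv).resolve_right hnot
  have : NeZero r := ⟨by omega⟩
  have hforall (a : PXV r s) : ∀ D ∈ 𝒞, ∀ x y z, IsFourCycle D a x y z → pxRel r s a x →
      IsAlternating a x y z := by
    induction reflTransGen_pxRel v a with
    | refl => exact fun D hD x y z hDv hvx ↦ halt.of_pxRel hr hs h𝒞 hC hD hCu hDv hvx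
    | @tail b c _ hbc ih =>
      obtain ⟨E, hE, y, z, hEb⟩ := h𝒞.exists_isFourCycle ((PX_adj hr).2 (.inl hbc))
      exact fun D hD x y z hDc hcx ↦ (ih E hE _ _ _ hEb hbc).of_pxRel hr hs h𝒞 hE hD hEb hDc hcx
  intro D hD
  obtain ⟨a, x, y, z, hDa, hax⟩ := exists_isFourCycle_pxRel hr h𝒞 hD
  exact ⟨a, x, y, z, hDa, hforall a D hD x y z hDa hax⟩

end Propagation

section Directed

variable {s : ℕ} {u v w t v' w' t' : PXV 4 s}

lemma IsDirected.next_unique (hs : 4 ≤ s) (h : IsDirected u v w t) (h' : IsDirected u v' w' t') :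
    v = v' := by
  have hlast {v w t : PXV 4 s} (h : IsDirected u v w t) :
      v.1 ⟨s - 1, by omega⟩ = u.1 ⟨s - 4, by omega⟩ := by
    obtain ⟨k, rfl⟩ := Nat.exists_eq_add_of_le' hs
    obtain ⟨-, ⟨-, hvw⟩, ⟨-, hwt⟩, -, htu⟩ := h
    exact ((hvw (k + 2) (by omega)).symm.trans (hwt (k + 1) (by omega)).symm).trans
      (htu k (by omega)).symm
  refine Prod.ext (funext fun ⟨i, hi⟩ ↦ ?_) (h.1.1.trans h'.1.1.symm)
  rcases Nat.lt_or_ge (i + 1) s with hi' | hi'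
  · exact (h.1.2 i hi').trans (h'.1.2 i hi').symm
  · obtain rfl : i = s - 1 := by omega
    exact (hlast h).trans (hlast h').symm

instance (r s : ℕ) : DecidableRel (pxRel r s) := fun u v ↦
  decidable_of_iff (v = (shiftTo u.1 0, u.2 + 1) ∨ v = (shiftTo u.1 1, u.2 + 1)) mem_natRight_iff

instance {r s : ℕ} (u v w t : PXV r s) : Decidable (IsAlternating u v w t) :=
  inferInstanceAs (Decidable (_ ∧ _))

end Directed

section Hypercube

variable {u v w t v' w' t' : PXV 4 2}

/-- An isomorphism from `PX(2,4,2)` to the 4-dimensional hypercube, under which the natural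
4-cycles become the squares in the pairs of directions `{0, 1}` and `{2, 3}`. -/
def cubeEquiv : PXV 4 2 ≃ (Fin 4 → ZMod 2) where
  toFun u :=
    let a := u.1 0
    let b := u.1 1
    match (u.2 : Fin 4) with
    | 0 => ![a, a, b, b]
    | 1 => ![b + 1, b, a, a]
    | 2 => ![a + 1, a, b + 1, b]
    | 3 => ![b, b, a + 1, a]
  invFun c :=
    if c 0 = c 1 then if c 2 = c 3 then (![c 1, c 3], 0) else (![c 3, c 1], 3)
    else if c 2 = c 3 then (![c 3, c 1], 1) else (![c 1, c 3], 2)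
  left_inv := by decide +kernel
  right_inv := by decide +kernel

lemma PX_four_two_adj_iff : (PX 4 2).Adj u v ↔ hammingDist (cubeEquiv u) (cubeEquiv v) = 1 := by
  rw [PX_adj (by norm_num)]
  have h : ∀ u v, pxRel 4 2 u v ∨ pxRel 4 2 v u ↔ hammingDist (cubeEquiv u) (cubeEquiv v) = 1 := by
    decide +kernel
  exact h u v

/-- The automorphism of `PX(2,4,2)` that permutes the directions of the hypercube by `σ`. -/
def cubePerm (σ : Equiv.Perm (Fin 4)) : Equiv.Perm (PXV 4 2) :=
  cubeEquiv.symm.permCongr (σ.arrowCongr (.refl _))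

lemma isAut_cubePerm (σ : Equiv.Perm (Fin 4)) : IsAut (PX 4 2) (cubePerm σ) := fun u v ↦ by
  rw [PX_four_two_adj_iff, PX_four_two_adj_iff]
  have hdist : hammingDist (cubeEquiv (cubePerm σ u)) (cubeEquiv (cubePerm σ v)) =
      hammingDist (cubeEquiv u) (cubeEquiv v) :=
    Finset.card_equiv σ.symm (by simp [cubePerm])
  rw [hdist]

/-- The sum of the first letters along a 4-cycle of `PX(2,4,2)`, which tells apart the two sets of
pairs of directions, `{0, 2}, {1, 3}` and `{0, 3}, {1, 2}`, that directed 4-cycles can take in the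
hypercube. -/
def weight (u v w t : PXV 4 2) : ZMod 2 :=
  u.1 0 + v.1 0 + w.1 0 + t.1 0

lemma weight_rotate : weight v w t u = weight u v w t := by
  simp only [weight]; ring

/-- The coordinate transposition that makes the directed 4-cycles of weight `τ` alternating. -/
def weightPerm (τ : ZMod 2) : Equiv.Perm (PXV 4 2) :=
  cubePerm (Equiv.swap 1 (if τ = 0 then 2 else 3))

lemma IsDirected.isAlternating_weightPerm (h : IsDirected u v w t) :
    let π := weightPerm (weight u v w t)
    IsAlternating (π u) (π v) (π w) (π t) ∨ IsAlternating (π v) (π w) (π t) (π u) := by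
  have hall : ∀ u v, pxRel 4 2 u v → ∀ w, pxRel 4 2 v w → ∀ t, pxRel 4 2 w t → pxRel 4 2 t u →
      let π := weightPerm (weight u v w t)
      IsAlternating (π u) (π v) (π w) (π t) ∨ IsAlternating (π v) (π w) (π t) (π u) := by
    decide +kernel
  exact hall u v h.1 w h.2.1 t h.2.2.1 h.2.2.2

variable {𝒞 : Set (PX 4 2).Subgraph} {C D : (PX 4 2).Subgraph}

lemma weight_eq_of_isDirected (h𝒞 : IsFourCycleDecomp 𝒞) (hC : C ∈ 𝒞) (hD : D ∈ 𝒞)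
    (hCu : IsFourCycle C u v w t) (hDu : IsFourCycle D u v' w' t') (hC' : IsDirected u v w t)
    (hD' : IsDirected u v' w' t') : weight u v w t = weight u v' w' t' := by
  obtain ⟨huv, hvw, -, htu⟩ := hC'
  obtain ⟨huv', hvw', -, htu'⟩ := hD'
  have hv0 : v.1 0 = v'.1 0 := (huv.2 0 one_lt_two).trans (huv'.2 0 one_lt_two).symm
  have ht1 : t.1 1 = t'.1 1 := (htu.2 0 one_lt_two).symm.trans (htu'.2 0 one_lt_two)
  have hv : v = v' ↔ w.1 0 = w'.1 0 := by
    rw [show w.1 0 = v.1 1 from hvw.2 0 one_lt_two, show w'.1 0 = v'.1 1 from hvw'.2 0 one_lt_two,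
      Prod.ext_iff, funext_iff, Fin.forall_fin_two, huv.1, huv'.1]
    simp [hv0]
  have ht : t = t' ↔ t.1 0 = t'.1 0 := by
    have hlevel : t.2 = t'.2 := add_right_cancel (htu.1.symm.trans htu'.1)
    rw [Prod.ext_iff, funext_iff, Fin.forall_fin_two]
    simp [ht1, hlevel]
  have hletters : w.1 0 = w'.1 0 ↔ t.1 0 = t'.1 0 := by
    rw [← hv, ← ht]
    constructor <;> rintro rfl
    exacts [(h𝒞.eq_of_isFourCycle hC hD hCu hDu).2,
      (h𝒞.eq_of_isFourCycle hC hD hCu.reflect hDu.reflect).2]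
  have hsum : ∀ a b c d : ZMod 2, (a = c ↔ b = d) → a + b = c + d := by decide
  simp only [weight, hv0, add_assoc, hsum _ _ _ _ hletters]

lemma exists_weight_eq (h𝒞 : IsFourCycleDecomp 𝒞) (hdir : HasDirectedCycles 𝒞) :
    ∃ τ, ∀ C ∈ 𝒞, ∀ u v w t, IsFourCycle C u v w t → pxRel 4 2 u v → weight u v w t = τ := by
  have hout (a : PXV 4 2) :
      ∃ E ∈ 𝒞, ∃ b c d, IsFourCycle E a b c d ∧ pxRel 4 2 a b := by
    obtain ⟨b, -, -, hab, -⟩ := exists_pxRel_pair two_pos a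
    obtain ⟨E, hE, c, d, hEa⟩ := h𝒞.exists_isFourCycle ((PX_adj (by norm_num)).2 (.inl hab))
    exact ⟨E, hE, b, c, d, hEa, hab⟩
  have hconst {C D : (PX 4 2).Subgraph} {u v w t v' w' t' : PXV 4 2} (hC : C ∈ 𝒞) (hD : D ∈ 𝒞)
      (hCu : IsFourCycle C u v w t) (hDu : IsFourCycle D u v' w' t') (huv : pxRel 4 2 u v)
      (huv' : pxRel 4 2 u v') : weight u v w t = weight u v' w' t' :=
    weight_eq_of_isDirected h𝒞 hC hD hCu hDu (hdir hC hCu huv)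
      (hdir hD hDu huv')
  obtain ⟨C₀, hC₀, v₀, w₀, t₀, hC₀u, huv₀⟩ := hout 0
  refine ⟨weight 0 v₀ w₀ t₀, fun C hC u v w t hCu huv ↦ ?_⟩
  induction reflTransGen_pxRel 0 u generalizing C v w t with
  | refl => exact hconst hC hC₀ hCu hC₀u huv huv₀
  | @tail a b _ hab ih =>
    obtain ⟨E, hE, c, d, hEa⟩ := h𝒞.exists_isFourCycle ((PX_adj (by norm_num)).2 (.inl hab))
    have hbc := (hdir hE hEa hab).2.1
    rw [hconst hC hE hCu hEa.rotate huv hbc, weight_rotate]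
    exact ih E hE _ _ _ hEa hab

lemma isConjugateToNatural_two (h𝒞 : IsFourCycleDecomp 𝒞) (hdir : HasDirectedCycles 𝒞) :
    IsConjugateToNatural two_pos 𝒞 := by
  obtain ⟨τ, hτ⟩ := exists_weight_eq h𝒞 hdir
  refine isConjugateToNatural_of_isAut (by norm_num) two_pos h𝒞 (π := weightPerm τ)
    (isAut_cubePerm _) fun C hC ↦ ?_
  obtain ⟨u, v, w, t, hCu, huv⟩ := exists_isFourCycle_pxRel (by norm_num) h𝒞 hC
  have halt := (hdir hC hCu huv).isAlternating_weightPerm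
  rw [hτ C hC u v w t hCu huv] at halt
  exact halt.elim (fun h ↦ ⟨u, v, w, t, hCu, h⟩) fun h ↦ ⟨v, w, t, u, hCu.rotate, h⟩

end Hypercube

section Torus

variable {u v w t : PXV 4 3} {𝒞 : Set (PX 4 3).Subgraph}

/-- `PX(2,4,3)` is the medial graph of the 4 × 4 square grid on the torus, with the directed
4-cycles running around the vertices of the grid and the alternating 4-cycles around its faces.
This is the involution of the medial graph that comes from the duality of the grid. -/
def torusDual (u : PXV 4 3) : PXV 4 3 :=
  let a := u.1 0
  let b := u.1 1
  let c := u.1 2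
  match (u.2 : Fin 4) with
  | 0 => (![b, a, b], if a = c then 3 else 1)
  | 1 => if a = c then (![b, a, b + 1], 0) else (![b + 1, a, b], 2)
  | 2 => if a = c then (![b + 1, c, b], 3) else (![b, c, b + 1], 1)
  | 3 => (![b, c, b], if a = c then 0 else 2)

lemma torusDual_involutive : Function.Involutive torusDual := by
  unfold Function.Involutive
  decide +kernel

lemma isAut_torusDual : IsAut (PX 4 3) torusDual_involutive.toPerm := fun u v ↦ by
  rw [PX_adj (by norm_num), PX_adj (by norm_num)]
  have h : ∀ u v, pxRel 4 3 (torusDual u) (torusDual v) ∨ pxRel 4 3 (torusDual v) (torusDual u) ↔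
      pxRel 4 3 u v ∨ pxRel 4 3 v u := by
    decide +kernel
  exact h u v

lemma IsDirected.isAlternating_torusDual (h : IsDirected u v w t) :
    IsAlternating (torusDual u) (torusDual v) (torusDual w) (torusDual t) ∨
      IsAlternating (torusDual v) (torusDual w) (torusDual t) (torusDual u) := by
  have hall : ∀ u v, pxRel 4 3 u v → ∀ w, pxRel 4 3 v w → ∀ t, pxRel 4 3 w t → pxRel 4 3 t u →
      IsAlternating (torusDual u) (torusDual v) (torusDual w) (torusDual t) ∨
        IsAlternating (torusDual v) (torusDual w) (torusDual t) (torusDual u) := by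
    decide +kernel
  exact hall u v h.1 w h.2.1 t h.2.2.1 h.2.2.2

lemma isConjugateToNatural_three (h𝒞 : IsFourCycleDecomp 𝒞) (hdir : HasDirectedCycles 𝒞) :
    IsConjugateToNatural three_pos 𝒞 := by
  refine isConjugateToNatural_of_isAut (by norm_num) three_pos h𝒞 isAut_torusDual fun C hC ↦ ?_
  obtain ⟨u, v, w, t, hCu, huv⟩ := exists_isFourCycle_pxRel (by norm_num) h𝒞 hC
  rcases (hdir hC hCu huv).isAlternating_torusDual with h | h
  exacts [⟨u, v, w, t, hCu, h⟩, ⟨v, w, t, u, hCu.rotate, h⟩]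

end Torus

lemma HasDirectedCycles.lt_four {s : ℕ} (hs : 0 < s) {𝒞 : Set (PX 4 s).Subgraph}
    (h𝒞 : IsFourCycleDecomp 𝒞) (hdir : HasDirectedCycles 𝒞) : s < 4 := by
  by_contra! hs4
  obtain ⟨v, v', hne, hv, hv'⟩ := exists_pxRel_pair hs (0 : PXV 4 s)
  obtain ⟨C, hC, w, t, hCu⟩ := h𝒞.exists_isFourCycle ((PX_adj (by norm_num)).2 (.inl hv))
  obtain ⟨D, hD, w', t', hDu⟩ := h𝒞.exists_isFourCycle ((PX_adj (by norm_num)).2 (.inl hv'))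
  exact hne ((hdir hC hCu hv).next_unique hs4 (hdir hD hDu hv'))

lemma isConjugateToNatural_of_two_le {r s : ℕ} (hr : 3 ≤ r) (hs : 2 ≤ s)
    {𝒞 : Set (PX r s).Subgraph} (h𝒞 : IsFourCycleDecomp 𝒞) :
    IsConjugateToNatural (Nat.zero_lt_of_lt hs) 𝒞 := by
  rcases h𝒞.forall_isAlternatingCycle_or_hasDirectedCycles hr hs with halt | hdir
  · exact isConjugateToNatural_of_isAlternatingCycle hr _ h𝒞 halt
  obtain ⟨v, -, -, hv, -⟩ := exists_pxRel_pair (Nat.zero_lt_of_lt hs) (0 : PXV r s)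
  obtain ⟨C, hC, w, t, hCu⟩ := h𝒞.exists_isFourCycle ((PX_adj hr).2 (.inl hv))
  obtain rfl := (hdir hC hCu hv).eq_four hr
  have hs4 := hdir.lt_four (Nat.zero_lt_of_lt hs) h𝒞
  interval_cases s
  exacts [isConjugateToNatural_two h𝒞 hdir, isConjugateToNatural_three h𝒞 hdir]

section Involution

variable {α : Type*} [Finite α] {f g : α → α}

lemma exists_perm_semiconj (hf : f.Involutive) (hf' : ∀ a, f a ≠ a) (hg : g.Involutive)
    (hg' : ∀ a, g a ≠ a) : ∃ π : Equiv.Perm α, Function.Semiconj π f g := by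
  classical
  have := Fintype.ofFinite α
  have hcycle {h : α → α} (hh : h.Involutive) (hh' : ∀ a, h a ≠ a) :
      ∃ n, hh.toPerm.cycleType = Multiset.replicate n 2 ∧ n * 2 = Fintype.card α := by
    have htype := Equiv.Perm.cycleType_of_pow_prime_eq_one (σ := hh.toPerm) (p := 2)
      (Equiv.ext fun a ↦ by simp [sq, hh a])
    refine ⟨_, htype, ?_⟩
    have hsupp : hh.toPerm.support = Finset.univ :=
      Finset.eq_univ_iff_forall.2 fun a ↦ Equiv.Perm.mem_support.2 (hh' a)
    rw [← smul_eq_mul, ← Multiset.sum_replicate, ← htype, Equiv.Perm.sum_cycleType, hsupp,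
      Finset.card_univ]
  obtain ⟨m, hm, hmcard⟩ := hcycle hf hf'
  obtain ⟨n, hn, hncard⟩ := hcycle hg hg'
  obtain rfl : m = n := by omega
  obtain ⟨π, hπ⟩ := isConj_iff.1 (Equiv.Perm.isConj_iff_cycleType_eq.2 (hm.trans hn.symm))
  refine ⟨π, fun a ↦ ?_⟩
  simpa using Equiv.congr_fun (mul_inv_eq_iff_eq_mul.1 hπ) a

lemma exists_perm_semiconj_preserving (p : α → Prop) (hf : f.Involutive) (hf' : ∀ a, f a ≠ a)
    (hfp : ∀ a, p (f a) ↔ p a) (hg : g.Involutive) (hg' : ∀ a, g a ≠ a)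
    (hgp : ∀ a, p (g a) ↔ p a) :
    ∃ π : Equiv.Perm α, Function.Semiconj π f g ∧ ∀ a, p (π a) ↔ p a := by
  classical
  have hsub (q : α → Prop) (hfq : ∀ a, q a → q (f a)) (hgq : ∀ a, q a → q (g a)) :
      ∃ π : Equiv.Perm (Subtype q), Function.Semiconj π (Subtype.map f hfq) (Subtype.map g hgq) :=
    exists_perm_semiconj (fun a ↦ Subtype.ext (hf a)) (fun a h ↦ hf' a (congrArg Subtype.val h))
      (fun a ↦ Subtype.ext (hg a)) fun a h ↦ hg' a (congrArg Subtype.val h)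
  obtain ⟨π₁, h₁⟩ := hsub p (fun a ↦ (hfp a).2) fun a ↦ (hgp a).2
  obtain ⟨π₂, h₂⟩ := hsub (¬ p ·) (fun a ↦ (hfp a).not.2) fun a ↦ (hgp a).not.2
  refine ⟨π₁.subtypeCongr π₂, fun a ↦ ?_, fun a ↦ ?_⟩ <;> by_cases ha : p a
  · rw [Equiv.Perm.subtypeCongr.left_apply _ _ ha,
      Equiv.Perm.subtypeCongr.left_apply _ _ ((hfp a).2 ha)]
    exact congrArg Subtype.val (h₁ ⟨a, ha⟩)
  · rw [Equiv.Perm.subtypeCongr.right_apply _ _ ha,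
      Equiv.Perm.subtypeCongr.right_apply _ _ ((hfp a).not.2 ha)]
    exact congrArg Subtype.val (h₂ ⟨a, ha⟩)
  · rw [Equiv.Perm.subtypeCongr.left_apply _ _ ha]
    exact iff_of_true (π₁ ⟨a, ha⟩).2 ha
  · rw [Equiv.Perm.subtypeCongr.right_apply _ _ ha]
    exact iff_of_false (π₂ ⟨a, ha⟩).2 ha

end Involution

section Antipode

variable {V : Type} {Λ : SimpleGraph V} {𝒞 : Set Λ.Subgraph} {C D : Λ.Subgraph}
  {u v w t x y v' w' t' : V}

lemma IsFourCycle.adj_antipode_iff (h : IsFourCycle C u v w t) : C.Adj w x ↔ C.Adj u x := by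
  have hw := h.rotate.rotate.neighborSet_eq
  rw [Set.pair_comm, ← h.neighborSet_eq] at hw
  exact Set.ext_iff.1 hw x

/-- `u` and `w` are opposite vertices of some 4-cycle in `𝒞`. -/
def IsAntipode (𝒞 : Set Λ.Subgraph) (u w : V) : Prop :=
  ∃ C ∈ 𝒞, ∃ v t, IsFourCycle C u v w t

lemma IsAntipode.symm (h : IsAntipode 𝒞 u w) : IsAntipode 𝒞 w u :=
  have ⟨C, hC, v, t, hCu⟩ := h
  ⟨C, hC, t, v, hCu.rotate.rotate⟩

lemma IsAntipode.ne (h : IsAntipode 𝒞 u w) : u ≠ w :=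
  have ⟨_, _, _, _, hCu⟩ := h
  hCu.ne_left

lemma IsFourCycleDecomp.exists_isAntipode (h𝒞 : IsFourCycleDecomp 𝒞) (huv : Λ.Adj u v) :
    ∃ w, IsAntipode 𝒞 u w :=
  have ⟨C, hC, w, t, hCu⟩ := h𝒞.exists_isFourCycle huv
  ⟨w, C, hC, v, t, hCu⟩

lemma IsFourCycleDecomp.adj_or_adj (h𝒞 : IsFourCycleDecomp 𝒞)
    (hdeg : (Λ.neighborSet u).encard ≤ 4) (hC : C ∈ 𝒞) (hD : D ∈ 𝒞) (hne : C ≠ D)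
    (hCu : IsFourCycle C u v w t) (hDu : IsFourCycle D u v' w' t') (hux : Λ.Adj u x) :
    C.Adj u x ∨ D.Adj u x := by
  have hdisj : Disjoint (C.neighborSet u) (D.neighborSet u) :=
    Set.disjoint_left.2 fun y hCy hDy ↦ hne (h𝒞.eq_of_adj hC hD hCy hDy)
  have hcard : (C.neighborSet u ∪ D.neighborSet u).encard = 4 := by
    rw [Set.encard_union_eq hdisj, hCu.neighborSet_eq, hDu.neighborSet_eq,
      Set.encard_pair hCu.ne_right, Set.encard_pair hDu.ne_right]
    norm_num
  have heq : C.neighborSet u ∪ D.neighborSet u = Λ.neighborSet u :=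
    (Set.finite_of_encard_le_coe hdeg).eq_of_subset_of_encard_le'
      (Set.union_subset (C.neighborSet_subset u) (D.neighborSet_subset u)) (hdeg.trans hcard.ge)
  exact heq.superset hux

/- Otherwise the antipodes `w'` of `u` and `y` of `v` are joined both by the cycle of `𝒞` through
`u` and `w'` and by the one through `v` and `y`. -/
lemma IsFourCycleDecomp.antipode_eq_or_antipode_eq (h𝒞 : IsFourCycleDecomp 𝒞)
    (hdeg : ∀ a, (Λ.neighborSet a).encard ≤ 4)
    (hpath : ∀ a b c d, Λ.Adj a b → Λ.Adj b c → Λ.Adj c d → Λ.Adj a d) (hC : C ∈ 𝒞)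
    (hCu : IsFourCycle C u v w t) (hw' : IsAntipode 𝒞 u w') (hy : IsAntipode 𝒞 v y) :
    w' = w ∨ y = t := by
  obtain ⟨D, hD, v', t', hDu⟩ := hw'
  obtain ⟨E, hE, x, z, hEv⟩ := hy
  by_contra! hne
  have hCD : C ≠ D := fun h ↦ hne.1 (hDu.antipode_unique (h ▸ hCu))
  have hCE : C ≠ E := fun h ↦ hne.2 (hEv.antipode_unique (h ▸ hCu.rotate))
  have hvw' : E.Adj v w' := by
    have hΛ : Λ.Adj v w' :=
      hpath v u v' w' hCu.adj.symm.adj_sub hDu.adj.adj_sub hDu.rotate.adj.adj_sub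
    refine (h𝒞.adj_or_adj (hdeg v) hC hE hCE hCu.rotate hEv hΛ).resolve_left fun h ↦ ?_
    rcases hCu.rotate.eq_or_eq_of_adj h with rfl | rfl
    exacts [hne.1 rfl, hDu.ne_left rfl]
  have huy : D.Adj u y := by
    have hΛ : Λ.Adj u y :=
      hpath u v x y hCu.adj.adj_sub hEv.adj.adj_sub hEv.rotate.adj.adj_sub
    refine (h𝒞.adj_or_adj (hdeg u) hC hD hCD hCu hDu hΛ).resolve_left fun h ↦ ?_
    rcases hCu.eq_or_eq_of_adj h with rfl | rfl
    exacts [hEv.ne_left rfl, hne.2 rfl]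
  obtain rfl := h𝒞.eq_of_adj hD hE (hDu.adj_antipode_iff.2 huy)
    (hEv.adj_antipode_iff.2 hvw').symm
  exact hCD (h𝒞.eq_of_adj hC hD hCu.adj (hDu.adj_antipode_iff.1 hvw'.symm))

lemma IsFourCycleDecomp.exists_subsingleton_isAntipode [Nonempty V] (h𝒞 : IsFourCycleDecomp 𝒞)
    (hnbr : ∀ a, ∃ b, Λ.Adj a b) (hdeg : ∀ a, (Λ.neighborSet a).encard ≤ 4)
    (hpath : ∀ a b c d, Λ.Adj a b → Λ.Adj b c → Λ.Adj c d → Λ.Adj a d) :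
    ∃ a, {w | IsAntipode 𝒞 a w}.Subsingleton := by
  obtain ⟨u⟩ := ‹Nonempty V›
  obtain ⟨v, huv⟩ := hnbr u
  obtain ⟨C, hC, w, t, hCu⟩ := h𝒞.exists_isFourCycle huv
  by_cases hw : ∃ w', IsAntipode 𝒞 u w' ∧ w' ≠ w
  · obtain ⟨w', hw', hne⟩ := hw
    exact ⟨v, fun y hy z hz ↦
      ((h𝒞.antipode_eq_or_antipode_eq hdeg hpath hC hCu hw' hy).resolve_left hne).trans
        ((h𝒞.antipode_eq_or_antipode_eq hdeg hpath hC hCu hw' hz).resolve_left hne).symm⟩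
  · push Not at hw
    exact ⟨u, fun y hy z hz ↦ (hw y hy).trans (hw z hz).symm⟩

lemma IsFourCycleDecomp.exists_involutive_antipode [Nonempty V] (h𝒞 : IsFourCycleDecomp 𝒞)
    (hat : IsArcTransitive 𝒞) (hnbr : ∀ a, ∃ b, Λ.Adj a b)
    (hdeg : ∀ a, (Λ.neighborSet a).encard ≤ 4)
    (hpath : ∀ a b c d, Λ.Adj a b → Λ.Adj b c → Λ.Adj c d → Λ.Adj a d) :
    ∃ σ : V → V, σ.Involutive ∧ ∀ u w, IsAntipode 𝒞 u w ↔ w = σ u := by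
  obtain ⟨a, ha⟩ := h𝒞.exists_subsingleton_isAntipode hnbr hdeg hpath
  obtain ⟨b, hab⟩ := hnbr a
  obtain ⟨G, -, hG, hG𝒞⟩ := hat
  have hunique {u w w' : V} (hw : IsAntipode 𝒞 u w) (hw' : IsAntipode 𝒞 u w') : w = w' := by
    obtain ⟨v, huv⟩ := hnbr u
    obtain ⟨g, hg, rfl, -⟩ := hG u v a b huv hab
    have hmap {w : V} (hw : IsAntipode 𝒞 u w) : IsAntipode 𝒞 (g u) (g w) := by
      obtain ⟨C, hC, v, t, hCu⟩ := hw
      obtain ⟨D, hD, hCD⟩ := hG𝒞 g hg C hC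
      exact ⟨D, hD, g v, g t, hCu.map hCD⟩
    exact g.injective (ha (hmap hw) (hmap hw'))
  choose σ hσ using fun u ↦ h𝒞.exists_isAntipode (hnbr u).choose_spec
  exact ⟨σ, fun u ↦ hunique (hσ (σ u)) (hσ u).symm,
    fun u w ↦ ⟨fun h ↦ hunique h (hσ u), fun h ↦ h ▸ hσ u⟩⟩

end Antipode

section LengthOne

variable {r : ℕ} {u v w t : PXV r 1}

lemma pxRel_one_iff : pxRel r 1 u v ↔ v.2 = u.2 + 1 :=
  and_iff_left fun _ hi ↦ absurd hi (by omega)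

/- An element of the group rotating the diamond by one step would make `u` and `w` twins, like `v`
and `t`; but `w` has neighbours two levels away from those of `u`. -/
lemma IsArcTransitive.not_isDiamond (hr : 3 ≤ r) (hr4 : r ≠ 4) {𝒞 : Set (PX r 1).Subgraph}
    (h𝒞 : IsFourCycleDecomp 𝒞) (hat : IsArcTransitive 𝒞) {C : (PX r 1).Subgraph} (hC : C ∈ 𝒞)
    (hCu : IsFourCycle C u v w t) : ¬ IsDiamond u v w t := by
  rintro ⟨huv, hvw, hut, -⟩
  obtain ⟨G, hG, harc, hG𝒞⟩ := hat
  obtain ⟨g, hg, hgu, hgv⟩ := harc u v v w hCu.adj.adj_sub hCu.rotate.adj.adj_sub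
  obtain ⟨D, hD, hCD⟩ := hG𝒞 g hg C hC
  have hgC := hCu.map hCD
  rw [hgu, hgv] at hgC
  have hgw : g w = t := (h𝒞.eq_of_isFourCycle hD hC hgC hCu.rotate).1
  have hvt (x : PXV r 1) : (PX r 1).Adj v x ↔ (PX r 1).Adj t x := by
    simp only [PX_adj hr, pxRel_one_iff, huv.1, hut.1]
  have huw (x : PXV r 1) : (PX r 1).Adj u x ↔ (PX r 1).Adj w x := by
    rw [← hG g hg u x, hgu, hvt, ← hgw, hG g hg]
  obtain ⟨x, -, -, hwx, -⟩ := exists_pxRel_pair one_pos w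
  rcases (PX_adj hr).1 ((huw x).2 ((PX_adj hr).2 (.inl hwx))) with hux | hxu
  · exact not_pxRel_of_path hr huv hvw hwx hux
  · exact hr4 (IsDirected.eq_four hr ⟨huv, hvw, hwx, hxu⟩)

lemma isConjugateToNatural_one_of_ne_four (hr : 3 ≤ r) (hr4 : r ≠ 4)
    {𝒞 : Set (PX r 1).Subgraph} (h𝒞 : IsFourCycleDecomp 𝒞) (hat : IsArcTransitive 𝒞) :
    IsConjugateToNatural one_pos 𝒞 := by
  refine isConjugateToNatural_of_isAlternatingCycle hr one_pos h𝒞 fun C hC ↦ ?_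
  obtain ⟨u, v, w, t, hCu, huv⟩ := exists_isFourCycle_pxRel hr h𝒞 hC
  rcases hCu.isAlternating_or_isDirected_or_isDiamond hr huv with h | h | h | h
  · exact ⟨u, v, w, t, hCu, h⟩
  · exact absurd (h.eq_four hr) hr4
  · exact absurd h (hat.not_isDiamond hr hr4 h𝒞 hC hCu)
  · exact absurd h (hat.not_isDiamond hr hr4 h𝒞 hC hCu.rotate.rotate.rotate)

end LengthOne

section CompleteBipartite

lemma encard_neighborSet_le {r s : ℕ} (hr : 3 ≤ r) (hs : 0 < s) (u : PXV r s) :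
    ((PX r s).neighborSet u).encard ≤ 4 := by
  have hpair {a b : PXV r s} : ({a, b} : Set (PXV r s)).encard ≤ 2 :=
    (Set.encard_insert_le _ _).trans (by rw [Set.encard_singleton, one_add_one_eq_two])
  have hout : {v | pxRel r s u v}.encard ≤ 2 := by
    rw [show {v | pxRel r s u v} = natRight u.1 u.2 from Set.ext fun _ ↦ mem_natRight_iff.symm]
    exact hpair
  have hin : {v | pxRel r s v u}.encard ≤ 2 := by
    rcases Set.eq_empty_or_nonempty {v | pxRel r s v u} with h | ⟨v, hv : pxRel r s v u⟩
    · simp [h]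
    · rw [show {v | pxRel r s v u} = natLeft hs v.1 v.2 from
        Set.ext fun _ ↦ (mem_natLeft_iff hs hv).symm]
      exact hpair
  calc ((PX r s).neighborSet u).encard
      = ({v | pxRel r s u v} ∪ {v | pxRel r s v u}).encard :=
        congrArg _ (Set.ext fun _ ↦ PX_adj hr)
    _ ≤ _ := Set.encard_union_le _ _
    _ ≤ 2 + 2 := add_le_add hout hin
    _ = 4 := by norm_num

lemma PX_four_one_adj_iff {u v : PXV 4 1} : (PX 4 1).Adj u v ↔ ¬ (Even u.2 ↔ Even v.2) := by
  have hparity : ∀ x y : ZMod 4, (y = x + 1 ∨ x = y + 1) ↔ ¬ (Even x ↔ Even y) := by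
    unfold Even
    decide
  rw [PX_adj (by norm_num), pxRel_one_iff, pxRel_one_iff, hparity]

lemma IsAntipode.even_iff {𝒞 : Set (PX 4 1).Subgraph} {u w : PXV 4 1} (h : IsAntipode 𝒞 u w) :
    Even w.2 ↔ Even u.2 := by
  obtain ⟨C, -, v, t, hC⟩ := h
  have huv := PX_four_one_adj_iff.1 hC.adj.adj_sub
  have hvw := PX_four_one_adj_iff.1 hC.rotate.adj.adj_sub
  tauto

lemma isConjugateToNatural_four_one {𝒞 : Set (PX 4 1).Subgraph} (h𝒞 : IsFourCycleDecomp 𝒞)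
    (hat : IsArcTransitive 𝒞) : IsConjugateToNatural one_pos 𝒞 := by
  have hr : 3 ≤ 4 := by norm_num
  obtain ⟨σ, hσσ, hσ⟩ := h𝒞.exists_involutive_antipode hat
    (fun a ↦ have ⟨v, _, _, hv, _⟩ := exists_pxRel_pair one_pos a; ⟨v, (PX_adj hr).2 (.inl hv)⟩)
    (encard_neighborSet_le hr one_pos)
    (fun _ _ _ _ ↦ by simp only [PX_four_one_adj_iff]; tauto)
  have hσ' (u : PXV 4 1) : IsAntipode 𝒞 u (σ u) := (hσ u _).2 rfl
  let τ : PXV 4 1 → PXV 4 1 := fun u ↦ (u.1 + 1, u.2)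
  obtain ⟨π, hπσ, hπ⟩ := exists_perm_semiconj_preserving (g := τ) (fun u ↦ Even u.2) hσσ
    (fun u ↦ (hσ' u).ne.symm) (fun u ↦ (hσ' u).even_iff)
    (fun u ↦ Prod.ext (by simp [τ, add_assoc, CharTwo.add_self_eq_zero]) rfl)
    (fun u h ↦ by simpa [τ] using congrArg Prod.fst h) (fun _ ↦ Iff.rfl)
  have hπaut : IsAut (PX 4 1) π := fun u v ↦ by simp only [PX_four_one_adj_iff, hπ]
  have hlevel {u w : PXV 4 1} (h : IsAntipode 𝒞 u w) : (π w).2 = (π u).2 := by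
    rw [(hσ u w).1 h, hπσ u]
  refine isConjugateToNatural_of_isAut hr one_pos h𝒞 hπaut fun C hC ↦ ?_
  obtain ⟨u, v, hCuv⟩ := h𝒞.exists_adj hC
  obtain ⟨w, t, hCu⟩ := h𝒞.isFourCycle_of_adj hC hCuv
  have huw := hlevel ⟨C, hC, v, t, hCu⟩
  have hvt := hlevel ⟨C, hC, w, u, hCu.rotate⟩
  rcases (PX_adj hr).1 ((hπaut u v).2 hCuv.adj_sub) with h | h
  · refine ⟨u, v, w, t, hCu, ?_⟩
    simpa [IsAlternating, pxRel_one_iff, huw, hvt] using h.1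
  · refine ⟨v, w, t, u, hCu.rotate, ?_⟩
    simpa [IsAlternating, pxRel_one_iff, huw, hvt] using h.1

end CompleteBipartite

theorem stmt3_general {r s : ℕ} (hr : 3 ≤ r) (hs : 1 ≤ s) {𝒞 : Set (PX r s).Subgraph}
    (h𝒞 : IsFourCycleDecomp 𝒞) (hat : s = 1 → IsArcTransitive 𝒞) :
    IsConjugateToNatural hs 𝒞 := by
  rcases hs.eq_or_lt with rfl | hs
  · rcases eq_or_ne r 4 with rfl | hr4
    · exact isConjugateToNatural_four_one h𝒞 (hat rfl)
    · exact isConjugateToNatural_one_of_ne_four hr hr4 h𝒞 (hat rfl)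
  · exact isConjugateToNatural_of_two_le hr hs h𝒞

theorem stmt3 (r s : ℕ) (hr : 3 ≤ r) (hs : 1 ≤ s) (hsr : s ≤ r - 1)
    (𝒞 : Set ((PX r s).Subgraph))
    (hcyc : ∀ C ∈ 𝒞, IsCycleSubgraph C ∧ C.verts.ncard = 4)
    (hdec : ∀ u v : PXV r s, (PX r s).Adj u v → ∃! C, C ∈ 𝒞 ∧ C.Adj u v)
    (hat : ∃ G : Subgroup (Equiv.Perm (PXV r s)),
      (∀ g ∈ G, ∀ u v, (PX r s).Adj (g u) (g v) ↔ (PX r s).Adj u v) ∧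
      (∀ u v u' v' : PXV r s, (PX r s).Adj u v → (PX r s).Adj u' v' →
        ∃ g ∈ G, g u = u' ∧ g v = v') ∧
      (∀ g ∈ G, ∀ C ∈ 𝒞, ∃ D ∈ 𝒞, IsMapOf g C D)) :
    ∃ π : Equiv.Perm (PXV r s),
      (∀ u v, (PX r s).Adj (π u) (π v) ↔ (PX r s).Adj u v) ∧
      (∀ D : (PX r s).Subgraph,
        (∃ C ∈ 𝒞, IsMapOf π C D) ↔ D ∈ NaturalDecomp r s hs) :=
  stmt3_general hr hs ⟨hcyc, hdec⟩ fun _ ↦ hat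

end Stmt3
end

section
/- Let Γ be a finite connected cubic G-vertex-transitive graph, and suppose the socle of G is a direct product T_1 × ⋯ × T_t of t nonabelian simple groups. Then G contains a subgroup that is semiregular on the vertices of Γ and has order at least 5^t. -/
/- STATEMENT 16:
Let Γ be a finite connected cubic G-vertex-transitive graph, and suppose the socle of G
is a direct product T₁ × ⋯ × T_t of t nonabelian simple groups. Then G contains a
subgroup that is semiregular on the vertices of Γ and has order at least 5^t. -/

namespace Stmt16

/-- A minimal normal subgroup: a nontrivial normal subgroup containing no nontrivial
proper normal subgroup of the ambient group. -/
def IsMinimalNormal {H : Type} [Group H] (N : Subgroup H) : Prop :=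
  N.Normal ∧ N ≠ ⊥ ∧ ∀ M : Subgroup H, M.Normal → M ≤ N → M = ⊥ ∨ M = N

/-- The socle of a group: the subgroup generated by its minimal normal subgroups. -/
def socle (H : Type) [Group H] : Subgroup H :=
  sSup {N : Subgroup H | IsMinimalNormal N}

/-- A set of permutations is semiregular if only the identity fixes a point. -/
def Semiregular {V : Type} (N : Subgroup (Equiv.Perm V)) : Prop :=
  ∀ n ∈ N, ∀ v : V, n v = v → n = 1

/-!
An automorphism of a connected graph of valency at most `4` which fixes a vertex and has order
coprime to `4!` fixes every neighbour of that vertex, hence every vertex. So every group of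
automorphisms of order coprime to `6` is semiregular, and in a product of `t` nonabelian simple
groups it suffices to take one cyclic subgroup of prime order at least `5` in each factor.

Such primes exist by Burnside's `p ^ a * q ^ b` theorem, which rests on the fact that a nonabelian
simple group has no conjugacy class of prime power size `p ^ k > 1`. If `g` lay in such a class,
every irreducible `π` of degree `d` with `p ∤ d` would either satisfy `trace (π g) = 0` or send `g`
to a scalar, and the latter forces `g` into the centre unless `π` is trivial. Subtracting from `g`
the averaging idempotent removes the trivial representation, so the trace of `g - average` on the
group algebra would be `p` times an algebraic integer; but this trace is `-1`.
-/

section RootsOfUnity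

lemma eq_of_sum_eq_card_smul_of_norm_le {ι E : Type*} [Fintype ι] [NormedAddCommGroup E]
    [InnerProductSpace ℝ E] {f : ι → E} {a : E} (hf : ∀ i, ‖f i‖ ≤ ‖a‖)
    (hsum : ∑ i, f i = Fintype.card ι • a) (i : ι) : f i = a := by
  have hle : ∑ i, ‖f i - a‖ ^ 2 ≤ 0 := calc
    ∑ i, ‖f i - a‖ ^ 2 = ∑ i, (‖f i‖ ^ 2 - 2 * inner ℝ (f i) a + ‖a‖ ^ 2) := by
      simp only [norm_sub_sq_real]
    _ ≤ ∑ i, (‖a‖ ^ 2 - 2 * inner ℝ (f i) a + ‖a‖ ^ 2) := by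
      gcongr with i
      exact hf i
    _ = 2 * (Fintype.card ι * ‖a‖ ^ 2 - inner ℝ (∑ i, f i) a) := by
      rw [Finset.sum_add_distrib, Finset.sum_sub_distrib, ← Finset.mul_sum, sum_inner]
      simp only [Finset.sum_const, Finset.card_univ, nsmul_eq_mul]
      ring
    _ = 0 := by
      rw [hsum, ← Nat.cast_smul_eq_nsmul ℝ, real_inner_smul_left, real_inner_self_eq_norm_sq,
        sub_self, mul_zero]
  have hzero := (Finset.sum_eq_zero_iff_of_nonneg fun i _ => sq_nonneg ‖f i - a‖).1
    (hle.antisymm (Finset.sum_nonneg fun i _ => sq_nonneg _)) i (Finset.mem_univ i)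
  simpa [sub_eq_zero] using hzero

variable {ι : Type*} [Fintype ι] {n : ℕ}

lemma exists_average_pow_eq_one {K : Type*} [Field K] [NumberField K] {f : ι → K} (hn : n ≠ 0)
    (hf : ∀ i, f i ^ n = 1) (hint : IsIntegral ℤ ((∑ i, f i) / Fintype.card ι))
    (hne : ∑ i, f i ≠ 0) : ∃ m, 0 < m ∧ ((∑ i, f i) / Fintype.card ι) ^ m = 1 := by
  have hι : Fintype.card ι ≠ 0 := fun h => hne <| by
    have := Fintype.card_eq_zero_iff.1 h
    exact Fintype.sum_empty f
  have hnorm (φ : K →+* ℂ) : ‖φ ((∑ i, f i) / Fintype.card ι)‖ ≤ 1 := by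
    have hφ (i : ι) : ‖φ (f i)‖ = 1 :=
      Complex.norm_eq_one_of_pow_eq_one (by rw [← map_pow, hf, map_one]) hn
    rw [map_div₀, map_sum, map_natCast, norm_div, Complex.norm_natCast]
    exact div_le_one_of_le₀ ((norm_sum_le _ _).trans_eq (by simp [hφ])) (Nat.cast_nonneg _)
  obtain ⟨m, hm, hpow⟩ := NumberField.Embeddings.pow_eq_one_of_norm_le_one K ℂ
    (div_ne_zero hne (Nat.cast_ne_zero.2 hι)) hint hnorm
  exact ⟨m, hm, hpow⟩

lemma norm_average_eq_one {f : ι → ℂ} (hn : n ≠ 0) (hf : ∀ i, f i ^ n = 1)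
    (hint : IsIntegral ℤ ((∑ i, f i) / Fintype.card ι)) (hne : ∑ i, f i ≠ 0) :
    ‖(∑ i, f i) / Fintype.card ι‖ = 1 := by
  let K := IntermediateField.adjoin ℚ (Set.range f)
  have : FiniteDimensional ℚ K := IntermediateField.finiteDimensional_adjoin <| by
    rintro _ ⟨i, rfl⟩
    exact IsIntegral.of_pow (Nat.pos_of_ne_zero hn) (hf i ▸ isIntegral_one)
  have : NumberField K := ⟨⟩
  let g (i : ι) : K := ⟨f i, IntermediateField.subset_adjoin _ _ ⟨i, rfl⟩⟩
  have hsum : algebraMap K ℂ (∑ i, g i) = ∑ i, f i := map_sum _ _ _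
  have havg : algebraMap K ℂ ((∑ i, g i) / Fintype.card ι) = (∑ i, f i) / Fintype.card ι := by
    rw [map_div₀, hsum, map_natCast]
  rw [← havg, isIntegral_algebraMap_iff (algebraMap K ℂ).injective] at hint
  obtain ⟨m, hm, hpow⟩ := exists_average_pow_eq_one hn (fun i => Subtype.ext (hf i)) hint
    fun h => hne <| by rw [← hsum, h, map_zero]
  refine Complex.norm_eq_one_of_pow_eq_one ?_ hm.ne'
  rw [← havg, ← map_pow, hpow, map_one]

lemma eq_average_of_isIntegral {f : ι → ℂ} (hn : n ≠ 0) (hf : ∀ i, f i ^ n = 1)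
    (hint : IsIntegral ℤ ((∑ i, f i) / Fintype.card ι)) (hne : ∑ i, f i ≠ 0) (i : ι) :
    f i = (∑ j, f j) / Fintype.card ι := by
  refine eq_of_sum_eq_card_smul_of_norm_le (fun j => ?_) ?_ i
  · rw [Complex.norm_eq_one_of_pow_eq_one (hf j) hn, norm_average_eq_one hn hf hint hne]
  · have : (Fintype.card ι : ℂ) ≠ 0 :=
      Nat.cast_ne_zero.2 (Fintype.card_pos_iff.2 ⟨i⟩).ne'
    rw [nsmul_eq_mul, mul_div_cancel₀ _ this]

end RootsOfUnity

section FiniteOrderMatrix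

open Polynomial

variable {n : Type*} [Fintype n] [DecidableEq n] {m : ℕ}

lemma pow_eq_one_of_mem_roots_charpoly {K : Type*} [Field K] {M : Matrix n n K} (hM : M ^ m = 1)
    {z : K} (hz : z ∈ M.charpoly.roots) : z ^ m = 1 := by
  have hspec : z ∈ spectrum K M :=
    Matrix.mem_spectrum_iff_isRoot_charpoly.2 (isRoot_of_mem_roots hz)
  have : Nontrivial (Matrix n n K) := by
    by_contra h
    rw [not_nontrivial_iff_subsingleton] at h
    simp [spectrum.of_subsingleton] at hspec
  simpa [hM, spectrum.one_eq] using spectrum.pow_mem_pow M m hspec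

lemma isIntegral_trace_of_pow_eq_one {K : Type*} [Field K] [IsAlgClosed K] {M : Matrix n n K}
    (hm : m ≠ 0) (hM : M ^ m = 1) : IsIntegral ℤ M.trace := by
  rw [Matrix.trace_eq_sum_roots_charpoly]
  exact IsIntegral.multiset_sum fun z hz => IsIntegral.of_pow (Nat.pos_of_ne_zero hm) <|
    pow_eq_one_of_mem_roots_charpoly hM hz ▸ isIntegral_one

lemma eq_algebraMap_of_forall_mem_roots_charpoly {K : Type*} [Field K] [IsAlgClosed K]
    {M : Matrix n n K} (hm : (m : K) ≠ 0) (hM : M ^ m = 1) {s : K}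
    (hs : ∀ z ∈ M.charpoly.roots, z = s) : M = algebraMap K _ s := by
  have hcharpoly : M.charpoly = (X - C s) ^ M.charpoly.roots.card := by
    conv_lhs => rw [(IsAlgClosed.splits M.charpoly).eq_prod_roots_of_monic M.charpoly_monic,
      Multiset.eq_replicate_of_mem hs, Multiset.map_replicate, Multiset.prod_replicate]
  have hsq : Squarefree (minpoly K M) :=
    (separable_X_pow_sub_C (1 : K) hm one_ne_zero).squarefree.squarefree_of_dvd
      (minpoly.dvd _ _ (by simp [hM]))
  have hdvd : minpoly K M ∣ X - C s :=
    (hsq.dvd_pow_iff_dvd (Nat.succ_ne_zero _)).1 <|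
      (hcharpoly ▸ Matrix.minpoly_dvd_charpoly M).trans (pow_dvd_pow _ (Nat.le_succ _))
  simpa [sub_eq_zero] using minpoly.dvd_iff.1 hdvd

lemma eq_algebraMap_of_isIntegral_trace_div_card {M : Matrix n n ℂ} (hm : m ≠ 0) (hM : M ^ m = 1)
    (hint : IsIntegral ℤ (M.trace / Fintype.card n)) (hne : M.trace ≠ 0) :
    M = algebraMap ℂ _ (M.trace / Fintype.card n) := by
  refine eq_algebraMap_of_forall_mem_roots_charpoly (Nat.cast_ne_zero.2 hm) hM fun z hz => ?_
  have hsum : ∑ w : M.charpoly.roots, w.1 = M.trace := by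
    rw [Matrix.trace_eq_sum_roots_charpoly, Finset.sum, Multiset.map_univ_coe]
  have hcard : Fintype.card M.charpoly.roots = Fintype.card n := by
    rw [Multiset.card_coe, ← (IsAlgClosed.splits M.charpoly).natDegree_eq_card_roots,
      Matrix.charpoly_natDegree_eq_dim]
  rw [← hsum, ← hcard] at hint ⊢
  exact eq_average_of_isIntegral hm
    (fun w => pow_eq_one_of_mem_roots_charpoly hM (Multiset.coe_mem)) hint (hsum ▸ hne)
    ⟨z, ⟨0, Multiset.count_pos.2 hz⟩⟩

end FiniteOrderMatrix

section TraceMulLeft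

lemma trace_mulLeft_algEquiv {R A B : Type*} [CommRing R] [Ring A] [Ring B] [Algebra R A]
    [Algebra R B] (e : A ≃ₐ[R] B) (a : A) :
    LinearMap.trace R B (LinearMap.mulLeft R (e a)) =
      LinearMap.trace R A (LinearMap.mulLeft R a) := by
  have hconj : LinearMap.mulLeft R (e a) = e.toLinearEquiv.conj (LinearMap.mulLeft R a) :=
    LinearMap.ext fun x => by simp [LinearEquiv.conj_apply]
  rw [hconj, LinearMap.trace_conj']

lemma trace_mulLeft_pi_matrix {R ι : Type*} [CommRing R] [Fintype ι] {n : ι → Type*}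
    [∀ i, Fintype (n i)] (M : ∀ i, Matrix (n i) (n i) R) :
    LinearMap.trace R _ (LinearMap.mulLeft R M) = ∑ i, Fintype.card (n i) * (M i).trace := by
  classical
  let b := Pi.basis fun i => Matrix.stdBasis R (n i) (n i)
  have hdiag (i : ι) (j k : n i) :
      LinearMap.toMatrix b b (LinearMap.mulLeft R M) ⟨i, (j, k)⟩ ⟨i, (j, k)⟩ = M i j j := by
    rw [LinearMap.toMatrix_apply, Pi.basis_repr, Pi.basis_apply, LinearMap.mulLeft_apply,
      Pi.mul_apply, Pi.single_eq_same, Matrix.stdBasis_eq_single, Matrix.stdBasis,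
      Module.Basis.map_repr]
    simp [Matrix.mul_apply, Matrix.single]
  rw [LinearMap.trace_eq_matrix_trace R b, Matrix.trace, Fintype.sum_sigma]
  refine Finset.sum_congr rfl fun i _ => ?_
  simp only [Matrix.diag_apply, Fintype.sum_prod_type, hdiag, Finset.sum_const, Finset.card_univ,
    nsmul_eq_mul, ← Finset.mul_sum, Matrix.trace]

lemma trace_mulLeft_monoidAlgebra {R G : Type*} [CommRing R] [Group G] [Fintype G]
    (a : MonoidAlgebra R G) :
    LinearMap.trace R _ (LinearMap.mulLeft R a) = Fintype.card G * a.coeff 1 := by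
  classical
  rw [LinearMap.trace_eq_matrix_trace R (MonoidAlgebra.basis G R), Matrix.trace]
  simp only [Matrix.diag_apply, LinearMap.toMatrix_apply, LinearMap.mulLeft_apply]
  simp [MonoidAlgebra.basis]

end TraceMulLeft

section GroupAlgebra

open MonoidAlgebra GroupAlgebra

lemma mem_center_of_forall_of_mul_eq {k G : Type*} [CommSemiring k] [Monoid G]
    {z : MonoidAlgebra k G} (hz : ∀ g, of k G g * z = z * of k G g) :
    z ∈ Subalgebra.center k (MonoidAlgebra k G) := by
  rw [Subalgebra.mem_center_iff]
  intro a
  induction a using MonoidAlgebra.induction_on with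
  | of g => exact hz g
  | add a b ha hb => rw [add_mul, mul_add, ha, hb]
  | smul r a ha => rw [smul_mul_assoc, mul_smul_comm, ha]

lemma average_mem_center (k G : Type*) [CommSemiring k] [Group G] [Fintype G]
    [Invertible (Fintype.card G : k)] :
    average k G ∈ Subalgebra.center k (MonoidAlgebra k G) :=
  mem_center_of_forall_of_mul_eq fun g => by
    rw [of_apply, mul_average_left, mul_average_right]

lemma trace_mulLeft_of_sub_average {k G : Type*} [CommRing k] [Group G] [Fintype G]
    [Invertible (Fintype.card G : k)] {g : G} (hg : g ≠ 1) :
    LinearMap.trace k _ (LinearMap.mulLeft k (of k G g - average k G)) = -1 := by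
  classical
  rw [trace_mulLeft_monoidAlgebra]
  simp [average, hg, Finsupp.single_apply]

/-- The sum of the elements of a conjugacy class, as an element of the group algebra. -/
noncomputable def classSum (k : Type*) {G : Type*} [Semiring k] [Monoid G] (C : ConjClasses G)
    [Fintype C.carrier] : MonoidAlgebra k G :=
  ∑ x : C.carrier, of k G x

lemma conj_mem_carrier_iff {G : Type*} [Group G] {C : ConjClasses G} (h x : G) :
    MulAut.conj h x ∈ C.carrier ↔ x ∈ C.carrier := by
  have hconj : ConjClasses.mk (MulAut.conj h x) = ConjClasses.mk x :=
    ConjClasses.mk_eq_mk_iff_isConj.2 (isConj_iff.2 ⟨h, rfl⟩).symm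
  rw [ConjClasses.mem_carrier_iff_mk_eq, ConjClasses.mem_carrier_iff_mk_eq, hconj]

lemma classSum_mem_center (k : Type*) {G : Type*} [CommSemiring k] [Group G] (C : ConjClasses G)
    [Fintype C.carrier] : classSum k C ∈ Subalgebra.center k (MonoidAlgebra k G) := by
  refine mem_center_of_forall_of_mul_eq fun h => ?_
  let σ : Equiv.Perm C.carrier :=
    Equiv.Perm.subtypePerm (MulAut.conj h).toEquiv (conj_mem_carrier_iff h)
  have hσ (x : C.carrier) : of k G h * of k G x = of k G (σ x) * of k G h := by
    rw [← map_mul, ← map_mul]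
    exact congrArg _ (inv_mul_cancel_right (h * x.1) h).symm
  simp only [classSum, Finset.mul_sum, Finset.sum_mul, hσ]
  exact Equiv.sum_comp σ fun x => of k G x * of k G h

lemma isIntegral_classSum (k : Type*) {G : Type*} [CommRing k] [Group G] [Finite G]
    (C : ConjClasses G) [Fintype C.carrier] : IsIntegral ℤ (classSum k C) := by
  have hmap : mapRingHom G (Int.castRingHom k) (classSum ℤ C) = classSum k C := by
    simp [classSum]
  rw [← hmap]
  exact (IsIntegral.of_finite ℤ _).map (mapRingHom G (Int.castRingHom k)).toIntAlgHom

end GroupAlgebra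

section MatrixRepresentation

open MonoidAlgebra GroupAlgebra

lemma map_mem_range_algebraMap_of_mem_center {K A B : Type*} [CommSemiring K] [Semiring A]
    [Semiring B] [Algebra K A] [Algebra K B] [Algebra.IsCentral K B] {π : A →ₐ[K] B}
    (hπ : Function.Surjective π) {z : A} (hz : z ∈ Subalgebra.center K A) :
    ∃ s, algebraMap K B s = π z := by
  have hcenter : π z ∈ Subalgebra.center K B := Subalgebra.mem_center_iff.2 fun b => by
    obtain ⟨a, rfl⟩ := hπ b
    rw [← map_mul, ← map_mul, Subalgebra.mem_center_iff.1 hz]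
  rwa [Algebra.IsCentral.center_eq_bot, Algebra.mem_bot] at hcenter

variable {n G : Type*} [Fintype n] [DecidableEq n] [Group G]

lemma trace_map_eq_of_isConj {k : Type*} [CommSemiring k]
    (π : MonoidAlgebra k G →ₐ[k] Matrix n n k) {x y : G} (hxy : IsConj x y) :
    (π (of k G x)).trace = (π (of k G y)).trace := by
  obtain ⟨c, rfl⟩ := isConj_iff.1 hxy
  rw [map_mul, map_mul π, Matrix.trace_mul_comm, ← map_mul π, ← map_mul,
    inv_mul_cancel_left]

lemma trace_map_classSum {k : Type*} [CommSemiring k] (π : MonoidAlgebra k G →ₐ[k] Matrix n n k)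
    (g : G) [Fintype (ConjClasses.mk g).carrier] :
    (π (classSum k (ConjClasses.mk g))).trace =
      Nat.card (ConjClasses.mk g).carrier * (π (of k G g)).trace := by
  have hconst (x : (ConjClasses.mk g).carrier) : (π (of k G x)).trace = (π (of k G g)).trace :=
    trace_map_eq_of_isConj π <| ConjClasses.mk_eq_mk_iff_isConj.1 <|
      ConjClasses.mem_carrier_iff_mk_eq.1 x.2
  simp only [classSum, map_sum, Matrix.trace_sum, hconst, Finset.sum_const, Finset.card_univ,
    nsmul_eq_mul, Nat.card_eq_fintype_card]

lemma map_average_eq_zero {K B : Type*} [Field K] [Fintype G] [Invertible (Fintype.card G : K)]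
    [Ring B] [Algebra K B] [Algebra.IsCentral K B] {π : MonoidAlgebra K G →ₐ[K] B}
    (hπ : Function.Surjective π) {h : G} (hh : π (of K G h) ≠ 1) : π (average K G) = 0 := by
  obtain ⟨s, hs⟩ := map_mem_range_algebraMap_of_mem_center hπ (average_mem_center K G)
  have habsorb : π (average K G) * (π (of K G h) - 1) = 0 := by
    rw [mul_sub, mul_one, ← map_mul, of_apply, mul_average_right, sub_self]
  rw [← hs, ← Algebra.smul_def, smul_eq_zero] at habsorb
  rw [← hs, habsorb.resolve_right (sub_ne_zero.2 hh), map_zero]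

lemma map_of_pow_card_eq_one {k A : Type*} [CommSemiring k] [Semiring A] [Algebra k A]
    (π : MonoidAlgebra k G →ₐ[k] A) (g : G) : π (of k G g) ^ Nat.card G = 1 := by
  rw [← map_pow, ← map_pow, pow_card_eq_one', map_one, map_one]

lemma exists_isIntegral_card_carrier_mul_trace_eq {K : Type*} [Field K] [Finite G] [Nonempty n]
    {π : MonoidAlgebra K G →ₐ[K] Matrix n n K} (hπ : Function.Surjective π) (g : G) :
    ∃ w : K, IsIntegral ℤ w ∧
      Nat.card (ConjClasses.mk g).carrier * (π (of K G g)).trace = Fintype.card n * w := by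
  have := Fintype.ofFinite (ConjClasses.mk g).carrier
  obtain ⟨w, hw⟩ := map_mem_range_algebraMap_of_mem_center hπ (classSum_mem_center K (.mk g))
  have hint : IsIntegral ℤ (algebraMap K (Matrix n n K) w) :=
    hw ▸ (isIntegral_classSum K _).map (π.restrictScalars ℤ)
  refine ⟨w, (isIntegral_algebraMap_iff (algebraMap K (Matrix n n K)).injective).1 hint, ?_⟩
  rw [← trace_map_classSum, ← hw]
  simp [Matrix.trace, Matrix.algebraMap_matrix_apply]

lemma trace_eq_zero_or_mem_range_algebraMap_of_coprime [Finite G] [Nonempty n]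
    {π : MonoidAlgebra ℂ G →ₐ[ℂ] Matrix n n ℂ} (hπ : Function.Surjective π) {g : G}
    (hcop : (Nat.card (ConjClasses.mk g).carrier).Coprime (Fintype.card n)) :
    (π (of ℂ G g)).trace = 0 ∨ ∃ s, algebraMap ℂ _ s = π (of ℂ G g) := by
  obtain ⟨w, hw, hmul⟩ := exists_isIntegral_card_carrier_mul_trace_eq hπ g
  obtain ⟨a, b, hab⟩ := Nat.isCoprime_iff_coprime.2 hcop
  have hbezout : (a * Nat.card (ConjClasses.mk g).carrier + b * Fintype.card n : ℂ) = 1 :=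
    mod_cast hab
  have hpow := map_of_pow_card_eq_one π g
  have hG : Nat.card G ≠ 0 := Nat.card_pos.ne'
  have hdiv : (π (of ℂ G g)).trace / Fintype.card n = a * w + b * (π (of ℂ G g)).trace := by
    rw [div_eq_iff (Nat.cast_ne_zero.2 Fintype.card_ne_zero)]
    linear_combination (-(π (of ℂ G g)).trace) * hbezout + a * hmul
  have hint : IsIntegral ℤ ((π (of ℂ G g)).trace / Fintype.card n) :=
    hdiv ▸ ((isIntegral_intCast a).mul hw).add
      ((isIntegral_intCast b).mul (isIntegral_trace_of_pow_eq_one hG hpow))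
  exact or_iff_not_imp_left.2 fun hne =>
    ⟨_, (eq_algebraMap_of_isIntegral_trace_div_card hG hpow hint hne).symm⟩

lemma exists_surjective_algHom_matrix_trace_mulLeft_eq (k G : Type*) [Field k] [IsAlgClosed k]
    [Group G] [Finite G] [NeZero (Nat.card G : k)] :
    ∃ (r : ℕ) (d : Fin r → ℕ)
      (π : ∀ i, MonoidAlgebra k G →ₐ[k] Matrix (Fin (d i)) (Fin (d i)) k),
      (∀ i, NeZero (d i)) ∧ (∀ i, Function.Surjective (π i)) ∧
        ∀ a, LinearMap.trace k _ (LinearMap.mulLeft k a) = ∑ i, d i * (π i a).trace := by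
  obtain ⟨r, d, hd, ⟨e⟩⟩ :=
    IsSemisimpleRing.exists_algEquiv_pi_matrix_of_isAlgClosed k (MonoidAlgebra k G)
  refine ⟨r, d, fun i => (Pi.evalAlgHom k _ i).comp e.toAlgHom, hd,
    fun i => (Function.surjective_eval i).comp e.surjective, fun a => ?_⟩
  rw [← trace_mulLeft_algEquiv e, trace_mulLeft_pi_matrix]
  simp

end MatrixRepresentation

section SimpleGroup

open MonoidAlgebra GroupAlgebra

lemma dvd_of_mul_isIntegral_eq {K : Type*} [Field K] [CharZero K] {a b : ℤ} (ha : a ≠ 0) {z : K}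
    (hz : IsIntegral ℤ z) (h : a * z = b) : a ∣ b := by
  have haK : (a : K) ≠ 0 := Int.cast_ne_zero.2 ha
  have hrat : z = algebraMap ℚ K (b / a) := by
    rw [map_div₀, map_intCast, map_intCast, eq_div_iff haK, mul_comm, h]
  rw [hrat, isIntegral_algebraMap_iff (algebraMap ℚ K).injective] at hz
  obtain ⟨m, hm⟩ := IsIntegrallyClosed.isIntegral_iff.1 hz
  rw [eq_intCast, eq_div_iff (Int.cast_ne_zero.2 ha)] at hm
  exact ⟨m, by rw [mul_comm]; exact_mod_cast hm.symm⟩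

lemma center_eq_bot_of_exists_mul_ne {G : Type*} [Group G] [IsSimpleGroup G]
    (hG : ∃ a b : G, a * b ≠ b * a) : Subgroup.center G = ⊥ := by
  obtain ⟨a, b, hab⟩ := hG
  have hnormal : (Subgroup.center G).Normal := inferInstance
  exact hnormal.eq_bot_or_eq_top.resolve_right fun htop =>
    hab (Subgroup.mem_center_iff.1 (htop ▸ Subgroup.mem_top b) a)

lemma injective_of_isSimpleGroup {G M : Type*} [Group G] [IsSimpleGroup G] [Monoid M]
    {φ : G →* M} {h : G} (hh : φ h ≠ 1) : Function.Injective φ := by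
  have hker : φ.ker = ⊥ := φ.normal_ker.eq_bot_or_eq_top.resolve_right fun htop =>
    hh (φ.mem_ker.1 (htop ▸ Subgroup.mem_top h))
  exact (injective_iff_map_eq_one φ).2 fun x hx => Subgroup.mem_bot.1 (hker ▸ φ.mem_ker.2 hx)

section Character

variable {G : Type*} [Group G] [Finite G] [IsSimpleGroup G] {g : G} {p k : ℕ}

lemma exists_isIntegral_card_mul_trace_eq_prime_mul {n : Type*} [Fintype n] [DecidableEq n]
    [Nonempty n] (hG : Subgroup.center G = ⊥) (hg : g ≠ 1) (hp : p.Prime)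
    (hcard : Nat.card (ConjClasses.mk g).carrier = p ^ k)
    {π : MonoidAlgebra ℂ G →ₐ[ℂ] Matrix n n ℂ} (hπ : Function.Surjective π)
    {h : G} (hh : π (of ℂ G h) ≠ 1) :
    ∃ z : ℂ, IsIntegral ℤ z ∧ Fintype.card n * (π (of ℂ G g)).trace = p * z := by
  by_cases hdvd : p ∣ Fintype.card n
  · obtain ⟨c, hc⟩ := hdvd
    have htrace : IsIntegral ℤ (π (of ℂ G g)).trace :=
      isIntegral_trace_of_pow_eq_one Nat.card_pos.ne' (map_of_pow_card_eq_one π g)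
    exact ⟨c * (π (of ℂ G g)).trace, (isIntegral_natCast c).mul htrace, by
      rw [hc, Nat.cast_mul, mul_assoc]⟩
  · have hcop : (Nat.card (ConjClasses.mk g).carrier).Coprime (Fintype.card n) :=
      hcard ▸ ((hp.coprime_iff_not_dvd).2 hdvd).pow_left k
    rcases trace_eq_zero_or_mem_range_algebraMap_of_coprime hπ hcop with hzero | ⟨s, hs⟩
    · exact ⟨0, isIntegral_zero, by rw [hzero, mul_zero, mul_zero]⟩
    · have hinj : Function.Injective ((π : MonoidAlgebra ℂ G →* Matrix n n ℂ).comp (of ℂ G)) :=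
        injective_of_isSimpleGroup hh
      have hcentral : g ∈ Subgroup.center G := Subgroup.mem_center_iff.2 fun x => hinj <| by
        change π (of ℂ G (x * g)) = π (of ℂ G (g * x))
        rw [map_mul, map_mul, map_mul, map_mul, ← hs, Algebra.commutes]
      exact absurd (Subgroup.mem_bot.1 (hG ▸ hcentral)) hg

theorem card_carrier_ne_prime_pow (hG : Subgroup.center G = ⊥) (hg : g ≠ 1) (hp : p.Prime) :
    Nat.card (ConjClasses.mk g).carrier ≠ p ^ k := by
  intro hcard
  have := Fintype.ofFinite G
  have : Invertible (Fintype.card G : ℂ) :=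
    invertibleOfNonzero (Nat.cast_ne_zero.2 Fintype.card_ne_zero)
  obtain ⟨r, d, π, hd, hπ, htrace⟩ := exists_surjective_algHom_matrix_trace_mulLeft_eq ℂ G
  have hterm (i : Fin r) : ∃ z : ℂ, IsIntegral ℤ z ∧
      d i * (π i (of ℂ G g - average ℂ G)).trace = p * z := by
    by_cases htriv : ∀ h, π i (of ℂ G h) = 1
    · have havg : π i (average ℂ G) = 1 := by
        simp only [average, map_smul, map_sum, htriv, Finset.sum_const, Finset.card_univ]
        rw [← Nat.cast_smul_eq_nsmul ℂ, smul_smul, invOf_mul_self, one_smul]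
      exact ⟨0, isIntegral_zero, by rw [map_sub, htriv, havg, sub_self, Matrix.trace_zero]; simp⟩
    · obtain ⟨h, hh⟩ := not_forall.1 htriv
      rw [map_sub, map_average_eq_zero (hπ i) hh, sub_zero]
      simpa using exists_isIntegral_card_mul_trace_eq_prime_mul hG hg hp hcard (hπ i) hh
  choose z hz hzeq using hterm
  have hsum : ((p : ℤ) : ℂ) * ∑ i, z i = (-1 : ℤ) := calc
    ((p : ℤ) : ℂ) * ∑ i, z i = ∑ i, d i * (π i (of ℂ G g - average ℂ G)).trace := by
      simp only [Int.cast_natCast, Finset.mul_sum, hzeq]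
    _ = (-1 : ℤ) := by
      rw [← htrace, trace_mulLeft_of_sub_average hg, Int.cast_neg, Int.cast_one]
  have hdvd : (p : ℤ) ∣ -1 := dvd_of_mul_isIntegral_eq (Nat.cast_ne_zero.2 hp.ne_zero)
    (IsIntegral.sum _ fun i _ => hz i) hsum
  exact hp.one_lt.ne' (Nat.dvd_one.1 (Int.natCast_dvd_natCast.1 (by simpa using hdvd)))

end Character

lemma card_carrier_dvd_index {G : Type*} [Group G] {H : Subgroup G} {g : G}
    (hH : ∀ h ∈ H, h * g = g * h) : Nat.card (ConjClasses.mk g).carrier ∣ H.index := by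
  let f : G →* ConjAct G := ConjAct.toConjAct.toMonoidHom
  have hle : H ≤ (MulAction.stabilizer (ConjAct G) g).comap f := fun h hh => by
    change ConjAct.toConjAct h • g = g
    rw [ConjAct.toConjAct_smul, hH h hh, mul_inv_cancel_right]
  have hindex : (Subgroup.comap f (MulAction.stabilizer (ConjAct G) g)).index =
      Nat.card (ConjClasses.mk g).carrier := by
    rw [Subgroup.index_comap_of_surjective _ ConjAct.toConjAct.surjective,
      MulAction.index_stabilizer, ConjAct.orbit_eq_carrier_conjClasses, Nat.card_coe_set_eq]
  exact hindex ▸ Subgroup.index_dvd_of_le hle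

variable {G : Type*} [Group G] [Finite G] [IsSimpleGroup G]

lemma index_sylow_ne_prime_pow (hG : Subgroup.center G = ⊥) {p q k : ℕ} [Fact p.Prime]
    (hq : q.Prime) (hp : p ∣ Nat.card G) (P : Sylow p G) : P.index ≠ q ^ k := by
  intro hindex
  have : Nontrivial P := by
    rw [← Finite.one_lt_card_iff_nontrivial]
    exact (Nat.Prime.one_lt Fact.out).trans_le
      (Nat.le_of_dvd Nat.card_pos (P.dvd_card_of_dvd_card hp))
  have := P.isPGroup'.center_nontrivial
  obtain ⟨x, hx⟩ := exists_ne (1 : Subgroup.center P)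
  have hg : ((x : P) : G) ≠ 1 := fun h => hx (Subtype.ext (Subtype.ext h))
  have hdvd : Nat.card (ConjClasses.mk ((x : P) : G)).carrier ∣ q ^ k :=
    hindex ▸ card_carrier_dvd_index fun y hy =>
      congrArg Subtype.val (Subgroup.mem_center_iff.1 x.2 ⟨y, hy⟩)
  obtain ⟨j, -, hj⟩ := (Nat.dvd_prime_pow hq).1 hdvd
  exact card_carrier_ne_prime_pow hG hg hq hj

theorem exists_prime_dvd_card_ne_ne (hG : Subgroup.center G = ⊥) {p q : ℕ} (hp : p.Prime)
    (hq : q.Prime) : ∃ r, r.Prime ∧ r ∣ Nat.card G ∧ r ≠ p ∧ r ≠ q := by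
  by_contra! hpq
  obtain ⟨r, hr, hrG⟩ := Nat.exists_prime_and_dvd (Finite.one_lt_card (α := G)).ne'
  obtain ⟨s, hs, hrs⟩ : ∃ s, s.Prime ∧ ∀ l, l.Prime → l ∣ Nat.card G → l ≠ r → l = s := by
    by_cases hrp : r = p
    · exact ⟨q, hq, fun l hl hlG hlr => hpq l hl hlG (hrp ▸ hlr)⟩
    · refine ⟨p, hp, fun l hl hlG hlr => ?_⟩
      by_contra hlp
      exact hlr ((hpq l hl hlG hlp).trans (hpq r hr hrG hrp).symm)
  have : Fact r.Prime := ⟨hr⟩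
  obtain ⟨P⟩ : Nonempty (Sylow r G) := inferInstance
  refine index_sylow_ne_prime_pow hG hs hrG P
    (Nat.eq_prime_pow_of_unique_prime_dvd P.index_ne_zero_of_finite fun {l} hl hlP =>
      hrs l hl (hlP.trans P.index_dvd_card) ?_)
  rintro rfl
  exact P.not_dvd_index hlP

lemma exists_prime_five_le_dvd_card (hG : Subgroup.center G = ⊥) :
    ∃ p, p.Prime ∧ 5 ≤ p ∧ p ∣ Nat.card G := by
  obtain ⟨p, hp, hpG, h2, h3⟩ := exists_prime_dvd_card_ne_ne hG Nat.prime_two Nat.prime_three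
  exact ⟨p, hp, hp.five_le_of_ne_two_of_ne_three h2 h3, hpG⟩

end SimpleGroup

section DirectProduct

lemma card_subgroup_pi {ι : Type*} [Fintype ι] {G : ι → Type*} [∀ i, Group (G i)]
    (K : ∀ i, Subgroup (G i)) : Nat.card (Subgroup.pi Set.univ K) = ∏ i, Nat.card (K i) :=
  (Nat.card_congr (Equiv.Set.univPi fun i => (K i : Set (G i)))).trans Nat.card_pi

open Nat in
lemma exists_subgroup_pi_coprime_card {ι : Type*} [Fintype ι] {S : ι → Type*} [∀ i, Group (S i)]
    [∀ i, Finite (S i)] [∀ i, IsSimpleGroup (S i)] (hS : ∀ i, Subgroup.center (S i) = ⊥) :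
    ∃ Q : Subgroup (∀ i, S i), (Nat.card Q).Coprime 4 ! ∧ 5 ^ Fintype.card ι ≤ Nat.card Q := by
  choose p hp hp5 hpS using fun i => exists_prime_five_le_dvd_card (hS i)
  have hx (i : ι) : ∃ x : S i, orderOf x = p i :=
    have : Fact (p i).Prime := ⟨hp i⟩
    exists_prime_orderOf_dvd_card' (p i) (hpS i)
  choose x hx using hx
  have hcard : Nat.card (Subgroup.pi Set.univ fun i => Subgroup.zpowers (x i)) = ∏ i, p i := by
    simp only [card_subgroup_pi, Nat.card_zpowers, hx]
  refine ⟨Subgroup.pi Set.univ fun i => Subgroup.zpowers (x i), ?_, ?_⟩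
  · rw [hcard]
    exact Nat.Coprime.prod_left fun i _ => (hp i).coprime_factorial_of_lt (hp5 i)
  · rw [hcard]
    exact Finset.pow_card_le_prod _ _ _ fun i _ => hp5 i

end DirectProduct

section Graph

open Nat in
lemma apply_eq_self_of_coprime_factorial {V : Type*} {h : Equiv.Perm V} {s : Set V}
    (hs : ∀ x, h x ∈ s ↔ x ∈ s) {d m : ℕ} (hd : s.encard ≤ d) (hcop : m.Coprime d !)
    (hpow : h ^ m = 1) {x : V} (hx : x ∈ s) : h x = x := by
  have hfin : s.Finite := Set.finite_of_encard_le_coe hd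
  have := hfin.to_subtype
  let σ : Equiv.Perm s := h.subtypePerm hs
  have hσm : σ ^ m = 1 := by
    ext y
    simp [σ, hpow]
  have hσd : σ ^ d ! = 1 := by
    have hcard : Nat.card (Equiv.Perm s) ∣ d ! := by
      rw [Nat.card_perm, Nat.card_coe_set_eq]
      exact Nat.factorial_dvd_factorial (by exact_mod_cast hfin.cast_ncard_eq ▸ hd)
    exact orderOf_dvd_iff_pow_eq_one.1 ((orderOf_dvd_natCard σ).trans hcard)
  have hσ : σ = 1 := orderOf_eq_one_iff.1 <| Nat.eq_one_of_dvd_coprimes hcop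
    (orderOf_dvd_of_pow_eq_one hσm) (orderOf_dvd_of_pow_eq_one hσd)
  exact congrArg Subtype.val (Equiv.congr_fun hσ ⟨x, hx⟩)

open Nat in
lemma semiregular_of_coprime_card {V : Type} {Γ : SimpleGraph V} (hconn : Γ.Connected) {d : ℕ}
    (hdeg : ∀ v, (Γ.neighborSet v).encard ≤ d) {H : Subgroup (Equiv.Perm V)}
    (hAut : ∀ h ∈ H, ∀ u v, Γ.Adj (h u) (h v) ↔ Γ.Adj u v) (hcop : (Nat.card H).Coprime d !) :
    Semiregular H := by
  intro h hh v hv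
  have hpow : h ^ Nat.card H = 1 := congrArg Subtype.val (pow_card_eq_one' (x := (⟨h, hh⟩ : H)))
  have hadj {u w : V} (huw : Γ.Adj u w) (hu : h u = u) : h w = w :=
    apply_eq_self_of_coprime_factorial (s := Γ.neighborSet u)
      (fun x => by simpa only [SimpleGraph.mem_neighborSet, hu] using hAut h hh u x)
      (hdeg u) hcop hpow huw
  have hwalk {u w : V} (W : Γ.Walk u w) : h u = u → h w = w := by
    induction W with
    | nil => exact id
    | cons huw _ ih => exact fun hu => ih (hadj huw hu)
  exact Equiv.ext fun w => (hconn.preconnected v w).elim fun W => hwalk W hv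

theorem stmt16_general {V : Type} (Γ : SimpleGraph V) (hconn : Γ.Connected)
    (hdeg : ∀ v, (Γ.neighborSet v).encard ≤ 4) (G : Subgroup (Equiv.Perm V))
    (hAut : ∀ g ∈ G, ∀ u v, Γ.Adj (g u) (g v) ↔ Γ.Adj u v) (N : Subgroup G) [Finite N]
    {ι : Type*} [Fintype ι] (S : ι → Type*) [∀ i, Group (S i)] [∀ i, IsSimpleGroup (S i)]
    (hnonab : ∀ i, ∃ a b : S i, a * b ≠ b * a) (e : N ≃* ∀ i, S i) :
    ∃ H : Subgroup (Equiv.Perm V), H ≤ G ∧ Semiregular H ∧ 5 ^ Fintype.card ι ≤ Nat.card H := by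
  have : Finite (∀ i, S i) := Finite.of_equiv N e.toEquiv
  have (i : ι) : Finite (S i) := Finite.of_surjective _ (Function.surjective_eval i)
  obtain ⟨Q, hcop, hcard⟩ :=
    exists_subgroup_pi_coprime_card fun i => center_eq_bot_of_exists_mul_ne (hnonab i)
  let φ : (∀ i, S i) →* Equiv.Perm V := G.subtype.comp (N.subtype.comp e.symm.toMonoidHom)
  have hφ : Function.Injective φ :=
    G.subtype_injective.comp (N.subtype_injective.comp e.symm.injective)
  have hle : Q.map φ ≤ G := by
    rintro _ ⟨q, -, rfl⟩
    exact SetLike.coe_mem _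
  rw [← Subgroup.card_map_of_injective hφ] at hcop hcard
  exact ⟨Q.map φ, hle, semiregular_of_coprime_card hconn hdeg (fun h hh => hAut h (hle hh)) hcop,
    hcard⟩

end Graph

theorem stmt16 {V : Type} [Fintype V] (Γ : SimpleGraph V)
    (hconn : Γ.Connected)
    (hcubic : ∀ v : V, (Γ.neighborSet v).ncard = 3)
    (G : Subgroup (Equiv.Perm V))
    (hAut : ∀ g ∈ G, ∀ u v : V, Γ.Adj (g u) (g v) ↔ Γ.Adj u v)
    (hTrans : ∀ u v : V, ∃ g ∈ G, g u = v)
    (t : ℕ) (S : Fin t → Type) [∀ i, Group (S i)]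
    (hsimple : ∀ i, IsSimpleGroup (S i))
    (hnonab : ∀ i, ∃ a b : S i, a * b ≠ b * a)
    (hsoc : Nonempty (↥(socle ↥G) ≃* ((i : Fin t) → S i))) :
    ∃ H : Subgroup (Equiv.Perm V), H ≤ G ∧ Semiregular H ∧ 5 ^ t ≤ Nat.card ↥H := by
  obtain ⟨e⟩ := hsoc
  have hdeg (v : V) : (Γ.neighborSet v).encard ≤ 4 := by
    rw [← (Set.toFinite _).cast_ncard_eq, hcubic v]
    norm_num
  simpa using stmt16_general Γ hconn hdeg G hAut (socle G) S hnonab e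

end Stmt16
end
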